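/- arXiv:math/0608079 — 2 statements merged into one kernel-verified Lean document; each statement's English description precedes it below -/
import Mathlib

section
/- There exists a unique symmetric K-bilinear form (·,·) on U_q^-(g) such that (1,1)=1 and (e_i'a, b) = (a, f_i b) for all i∈I and a,b∈U_q^-(g). This form is non-degenerate, and it moreover satisfies (e_i^* a, b) = (a, b f_i) for all i∈I and a,b∈U_q^-(g). -/
noncomputable section
open scoped BigOperators

abbrev KK : Type := RatFunc ℚ

def qq : KK := RatFunc.X

def qZ (n : ℤ) : KK := qq ^ n

def qInt (d : ℤ) (k : ℕ) : KK := (qq ^ (d * k) - qq ^ (-(d * k : ℤ))) / (qq ^ d - qq ^ (-d : ℤ))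

def qFact (d : ℤ) (k : ℕ) : KK := ∏ m ∈ Finset.range k, qInt d (m + 1)

variable {I : Type} [DecidableEq I]

/-- `b = 1 - (α_i^∨, α_j)` -/
def serreN (A : I → I → ℤ) (i j : I) : ℕ := (1 - 2 * A i j / A i i).toNat

def fSerre (A : I → I → ℤ) (i j : I) : FreeAlgebra KK I :=
  ∑ k ∈ Finset.range (serreN A i j + 1),
    ((-1 : KK) ^ k * (qFact (A i i / 2) k)⁻¹ * (qFact (A i i / 2) (serreN A i j - k))⁻¹) •
      ((FreeAlgebra.ι KK i) ^ k * FreeAlgebra.ι KK j * (FreeAlgebra.ι KK i) ^ (serreN A i j - k))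

inductive SerreRel (A : I → I → ℤ) : FreeAlgebra KK I → FreeAlgebra KK I → Prop
  | serre (i j : I) (h : i ≠ j) : SerreRel A (fSerre A i j) 0

abbrev Um (A : I → I → ℤ) : Type := RingQuot (SerreRel A)

def fgen (A : I → I → ℤ) (i : I) : Um A := RingQuot.mkAlgHom KK (SerreRel A) (FreeAlgebra.ι KK i)

def IsWt (A : I → I → ℤ) (ν : I →₀ ℕ) (a : Um A) : Prop :=
  a ∈ Submodule.span KK {x | ∃ L : List I, (∀ i, L.count i = ν i) ∧ x = (L.map (fgen A)).prod}

def IsCartan (A : I → I → ℤ) : Prop :=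
  (∀ i j, A i j = A j i) ∧ (∀ i, 0 < A i i) ∧ (∀ i, 2 ∣ A i i) ∧
  (∀ i j, i ≠ j → A i j ≤ 0) ∧ (∀ i j, A i i ∣ 2 * A i j)

def EprimRel (A : I → I → ℤ) (E : I → Module.End KK (Um A)) : Prop :=
  (∀ i, E i 1 = 0) ∧
  ∀ i j (a : Um A), E i (fgen A j * a) =
    (if i = j then a else 0) + qZ (-(A i j)) • (fgen A j * (E i a))

def EstarRel (A : I → I → ℤ) (Es : I → Module.End KK (Um A)) : Prop :=
  (∀ i, Es i 1 = 0) ∧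
  ∀ i j (a : Um A), Es i (a * fgen A j) =
    (if i = j then a else 0) + qZ (-(A i j)) • ((Es i a) * fgen A j)

/-- The defining properties of the bilinear form `(·,·)` on `U_q^-(g)`. -/
def BilProp (A : I → I → ℤ) (E : I → Module.End KK (Um A))
    (B : Um A →ₗ[KK] Um A →ₗ[KK] KK) : Prop :=
  (∀ a b : Um A, B a b = B b a) ∧ B 1 1 = 1 ∧
  ∀ (i : I) (a b : Um A), B (E i a) b = B a (fgen A i * b)

/-!
The free algebra acts on `Um A` through the operators `e'_i`; following this action by the
augmentation gives a pairing which descends to the form on `Um A`. Uniqueness is an induction on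
words, and the adjunction for `e_i^*` holds because `e_i^*` commutes with all `e'_j`.

For non-degeneracy, suppose the radical is nonzero. It is graded and stable under all `e'_i` and
`e_i^*`, so a nonzero homogeneous element `x` of minimal height in it, of weight `-β` say, is
killed by all of these operators. Two computations then give contradictory bounds on `(β, β)`.
* Since the form is non-degenerate in smaller height, the coproduct of `x` is `x ⊗ 1 + 1 ⊗ x`, so
  the antipode sends `x` to `-x`. The antipode is an anti-involution up to an explicit power of `q`,
  whence `(β, β) = (β, 2ρ) > 0`.
* By the quantum Serre relations, the adjoint action of `f_i` is nilpotent on every element of the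
  kernel of `e_i^*`, in particular on `x`. As `e'_i x = 0`, a rank one computation shows that this
  is impossible unless `(α_i, β) ≤ 0`. Summing over `i`, `(β, β) ≤ 0`.
-/

open Finset.HasAntidiagonal (antidiagonal mem_antidiagonal)

section QuantumIntegers

theorem qZ_ne_zero (n : ℤ) : qZ n ≠ 0 := zpow_ne_zero n RatFunc.X_ne_zero

theorem qZ_zero : qZ 0 = 1 := zpow_zero qq

theorem qZ_add (m n : ℤ) : qZ (m + n) = qZ m * qZ n := zpow_add₀ RatFunc.X_ne_zero m n

theorem qZ_pow (m : ℤ) (n : ℕ) : qZ m ^ n = qZ (m * n) := by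
  rw [qZ, qZ, zpow_mul, zpow_natCast]

theorem qZ_eq_one_iff {n : ℤ} : qZ n = 1 ↔ n = 0 := by
  have natCast_eq_zero (k : ℕ) (h : qZ k = 1) : k = 0 := by
    have hX : (Polynomial.X ^ k : Polynomial ℚ) = 1 := by
      apply RatFunc.algebraMap_injective ℚ
      rw [map_pow, RatFunc.algebraMap_X, map_one, ← h, qZ, zpow_natCast, qq]
    simpa using congrArg Polynomial.natDegree hX
  refine ⟨fun h => ?_, fun h => h ▸ qZ_zero⟩
  obtain ⟨k, rfl | rfl⟩ := n.eq_nat_or_neg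
  · exact_mod_cast natCast_eq_zero k h
  · have hk : qZ k = 1 := by rwa [qZ, zpow_neg, inv_eq_one] at h
    rw [natCast_eq_zero k hk, Nat.cast_zero, neg_zero]

theorem qZ_sub_qZ_neg_ne_zero {n : ℤ} (hn : n ≠ 0) : qZ n - qZ (-n) ≠ 0 := fun h => by
  have h2n : qZ (n + n) = 1 := by
    rw [qZ_add]
    nth_rw 1 [sub_eq_zero.mp h]
    rw [← qZ_add, neg_add_cancel, qZ_zero]
  have := qZ_eq_one_iff.mp h2n
  omega

theorem qInt_zero (d : ℤ) : qInt d 0 = 0 := by simp [qInt]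

theorem qInt_ne_zero {d : ℤ} (hd : d ≠ 0) {k : ℕ} (hk : k ≠ 0) : qInt d k ≠ 0 :=
  div_ne_zero (qZ_sub_qZ_neg_ne_zero (mul_ne_zero hd (Nat.cast_ne_zero.mpr hk)))
    (qZ_sub_qZ_neg_ne_zero hd)

theorem qInt_add (d : ℤ) (a b : ℕ) :
    qInt d (a + b) = qInt d a * qZ (d * b) + qInt d b * qZ (-(d * a)) := by
  have hqInt (k : ℕ) : qInt d k = (qZ (d * k) - qZ (-(d * k))) / (qZ d - qZ (-d)) := rfl
  rw [hqInt, hqInt, hqInt, div_mul_eq_mul_div, div_mul_eq_mul_div, ← add_div, sub_mul, sub_mul,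
    Nat.cast_add, mul_add, neg_add, qZ_add, qZ_add]
  ring

theorem qFact_zero (d : ℤ) : qFact d 0 = 1 := Finset.prod_range_zero _

theorem qFact_succ (d : ℤ) (k : ℕ) : qFact d (k + 1) = qFact d k * qInt d (k + 1) :=
  Finset.prod_range_succ _ k

end QuantumIntegers

section QuantumBinomial

/-- The coefficient of `X ^ a * Y ^ b` in the divided power `(X + Y) ^ (a + b) / [a + b]!` of
`q`-commuting variables, see `add_pow_eq_of_qcommute`. -/
def qBinomCoeff (d : ℤ) (a b : ℕ) : KK :=
  qZ (-(d * a * b)) * (qFact d a)⁻¹ * (qFact d b)⁻¹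

variable {d : ℤ}

theorem qInt_mul_qBinomCoeff_succ_left (hd : d ≠ 0) (a b : ℕ) :
    qInt d (a + 1) * qZ (d * b) * qBinomCoeff d (a + 1) b = qBinomCoeff d a b := by
  have hexp : qZ (d * b) * qZ (-(d * (a + 1 : ℕ) * b)) = qZ (-(d * a * b)) := by
    rw [← qZ_add]
    congr 1
    push_cast
    ring
  have := qInt_ne_zero hd a.succ_ne_zero
  rw [qBinomCoeff, qBinomCoeff, qFact_succ, ← hexp]
  field_simp

theorem qInt_mul_qBinomCoeff_succ_right (hd : d ≠ 0) (a b : ℕ) :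
    qInt d (b + 1) * qZ (-(d * a)) * qBinomCoeff d a (b + 1) =
      qZ (-(2 * d) * a) * qBinomCoeff d a b := by
  have hexp : qZ (-(d * a)) * qZ (-(d * a * (b + 1 : ℕ))) =
      qZ (-(2 * d) * a) * qZ (-(d * a * b)) := by
    rw [← qZ_add, ← qZ_add]
    congr 1
    push_cast
    ring
  have := qInt_ne_zero hd b.succ_ne_zero
  rw [qBinomCoeff, qBinomCoeff, qFact_succ, ← mul_assoc, ← mul_assoc, ← mul_assoc, ← mul_assoc,
    ← hexp]
  field_simp

variable {C : Type*} [Ring C] [Algebra KK C]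

theorem qInt_smul_sum_antidiagonal_succ (hd : d ≠ 0) (X Y : C) (m : ℕ) :
    qInt d (m + 1) • ∑ p ∈ antidiagonal (m + 1),
        qBinomCoeff d p.1 p.2 • (X ^ p.1 * Y ^ p.2) =
      ∑ p ∈ antidiagonal m, qBinomCoeff d p.1 p.2 • (X ^ (p.1 + 1) * Y ^ p.2) +
      ∑ p ∈ antidiagonal m,
        (qZ (-(2 * d) * p.1) * qBinomCoeff d p.1 p.2) • (X ^ p.1 * Y ^ (p.2 + 1)) := by
  have hsplit : qInt d (m + 1) • ∑ p ∈ antidiagonal (m + 1),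
        qBinomCoeff d p.1 p.2 • (X ^ p.1 * Y ^ p.2) =
      ∑ p ∈ antidiagonal (m + 1),
        (qInt d p.1 * qZ (d * p.2) * qBinomCoeff d p.1 p.2) • (X ^ p.1 * Y ^ p.2) +
      ∑ p ∈ antidiagonal (m + 1),
        (qInt d p.2 * qZ (-(d * p.1)) * qBinomCoeff d p.1 p.2) • (X ^ p.1 * Y ^ p.2) := by
    rw [Finset.smul_sum, ← Finset.sum_add_distrib]
    refine Finset.sum_congr rfl fun p hp => ?_
    rw [← mem_antidiagonal.mp hp, qInt_add, smul_smul, add_mul, add_smul]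
  rw [hsplit, Finset.Nat.sum_antidiagonal_succ, Finset.Nat.sum_antidiagonal_succ']
  simp only [qInt_zero, zero_mul, zero_smul, zero_add, qInt_mul_qBinomCoeff_succ_left hd,
    qInt_mul_qBinomCoeff_succ_right hd]

theorem add_pow_eq_of_qcommute (hd : d ≠ 0) {X Y : C} (hYX : Y * X = qZ (-(2 * d)) • (X * Y))
    (m : ℕ) :
    (X + Y) ^ m =
      qFact d m • ∑ p ∈ antidiagonal m, qBinomCoeff d p.1 p.2 • (X ^ p.1 * Y ^ p.2) := by
  have hYXpow (a : ℕ) : Y * X ^ a = qZ (-(2 * d) * a) • (X ^ a * Y) := by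
    have hsemi : SemiconjBy Y X (qZ (-(2 * d)) • X) := by
      rw [SemiconjBy, hYX, smul_mul_assoc]
    rw [(hsemi.pow_right a).eq, smul_pow, qZ_pow, smul_mul_assoc]
  induction m with
  | zero => simp [qBinomCoeff, qFact_zero, qZ_zero]
  | succ m ih =>
    rw [pow_succ', ih, qFact_succ, mul_smul, qInt_smul_sum_antidiagonal_succ hd, mul_smul_comm,
      add_mul, Finset.mul_sum, Finset.mul_sum]
    congr 2 <;> refine Finset.sum_congr rfl fun p _ => ?_
    · rw [mul_smul_comm, pow_succ', mul_assoc]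
    · rw [mul_smul_comm, ← mul_assoc, hYXpow, smul_mul_assoc, smul_smul, pow_succ', mul_assoc,
        mul_comm (qBinomCoeff _ _ _)]

end QuantumBinomial

section SerreSum

variable {C D : Type*} [Ring C] [Algebra KK C] [Ring D] [Algebra KK D]

/-- The left-hand side `∑ (-1)^a x^(a) y x^(b)` (over `a + b = N`) of a quantum Serre relation, with
divided powers formed with respect to `q ^ d`, evaluated in an arbitrary algebra. -/
def serreSum (d : ℤ) (N : ℕ) (x y : C) : C :=
  ∑ p ∈ antidiagonal N,
    ((-1) ^ p.1 * (qFact d p.1)⁻¹ * (qFact d p.2)⁻¹) • (x ^ p.1 * y * x ^ p.2)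

theorem fSerre_eq_serreSum {J : Type} (A : J → J → ℤ) (i j : J) :
    fSerre A i j =
      serreSum (A i i / 2) (serreN A i j) (FreeAlgebra.ι KK i) (FreeAlgebra.ι KK j) := by
  rw [fSerre, serreSum, Finset.Nat.sum_antidiagonal_eq_sum_range_succ_mk]

variable (d : ℤ) (N : ℕ)

theorem map_serreSum (φ : C →ₐ[KK] D) (x y : C) :
    φ (serreSum d N x y) = serreSum d N (φ x) (φ y) := by
  simp only [serreSum, map_sum, map_smul, map_mul, map_pow]

theorem serreSum_zero_right (x : C) : serreSum d N x 0 = 0 := by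
  simp only [serreSum, mul_zero, zero_mul, smul_zero, Finset.sum_const_zero]

theorem serreSum_smul (r s : KK) (x y : C) :
    serreSum d N (r • x) (s • y) = (r ^ N * s) • serreSum d N x y := by
  rw [serreSum, serreSum, Finset.smul_sum]
  refine Finset.sum_congr rfl fun p hp => ?_
  rw [← mem_antidiagonal.mp hp, smul_pow, smul_pow, smul_mul_smul_comm, smul_mul_smul_comm,
    smul_comm, pow_add, mul_right_comm]

theorem serreSum_single {M : Type*} [AddCommMonoid M] (u v : M) (x y : C) :
    serreSum d N (AddMonoidAlgebra.single u x) (AddMonoidAlgebra.single v y) =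
      AddMonoidAlgebra.single (N • u + v) (serreSum d N x y) := by
  rw [← AddMonoidAlgebra.singleAddHom_apply (N • u + v), serreSum, serreSum, map_sum]
  refine Finset.sum_congr rfl fun p hp => ?_
  rw [AddMonoidAlgebra.single_pow, AddMonoidAlgebra.single_pow, AddMonoidAlgebra.single_mul_single,
    AddMonoidAlgebra.single_mul_single, AddMonoidAlgebra.smul_single,
    AddMonoidAlgebra.singleAddHom_apply, ← mem_antidiagonal.mp hp, add_smul, add_right_comm]

theorem serreSum_op (x y : C) :
    serreSum d N (MulOpposite.op x) (MulOpposite.op y) =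
      (-1 : KK) ^ N • MulOpposite.op (serreSum d N x y) := by
  rw [serreSum, serreSum, ← Finset.Nat.sum_antidiagonal_swap, Finset.op_sum, Finset.smul_sum]
  refine Finset.sum_congr rfl fun p hp => ?_
  have hsign : (-1 : KK) ^ p.2 = (-1) ^ N * (-1) ^ p.1 := by
    rw [← mem_antidiagonal.mp hp, pow_add, mul_right_comm, ← mul_pow, neg_one_mul, neg_neg,
      one_pow, one_mul]
  rw [Prod.fst_swap, Prod.snd_swap, MulOpposite.op_smul, smul_smul, MulOpposite.op_mul,
    MulOpposite.op_mul, MulOpposite.op_pow, MulOpposite.op_pow, hsign, mul_assoc (_ ^ p.2)]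
  congr 1
  ring

end SerreSum

theorem mem_of_one_mem_of_gen_mul_mem {ι R C : Type*} [CommSemiring R] [Semiring C] [Algebra R C]
    {f : ι → C} (hf : Algebra.adjoin R (Set.range f) = ⊤) {S : Submodule R C} (one_mem : 1 ∈ S)
    (gen_mul_mem : ∀ i, ∀ a ∈ S, f i * a ∈ S) (a : C) : a ∈ S := by
  have hle : Submodule.span R (Submonoid.closure (Set.range f) : Set C) ≤ S :=
    Submodule.span_le.mpr fun x hx => by
      induction hx using Submonoid.closure_induction_left with
      | one => exact one_mem
      | mul_left x hx y _ hy =>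
        obtain ⟨i, rfl⟩ := hx
        exact gen_mul_mem i y hy
  apply hle
  rw [← Algebra.adjoin_eq_span, hf]
  trivial

namespace Um

section Lift

variable {J : Type} {C : Type*} [Ring C] [Algebra KK C] (A : J → J → ℤ)

/-- The algebra homomorphism `Um A → C` sending `fgen A j` to `g j`, for a family `g` which
satisfies the quantum Serre relations. -/
def lift (g : J → C)
    (hg : ∀ i j, i ≠ j → serreSum (A i i / 2) (serreN A i j) (g i) (g j) = 0) : Um A →ₐ[KK] C :=
  RingQuot.liftAlgHom KK ⟨FreeAlgebra.lift KK g, fun x y hxy => by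
    obtain ⟨i, j, hij⟩ := hxy
    rw [fSerre_eq_serreSum, map_serreSum, FreeAlgebra.lift_ι_apply, FreeAlgebra.lift_ι_apply,
      hg i j hij, map_zero]⟩

theorem lift_fgen (g : J → C)
    (hg : ∀ i j, i ≠ j → serreSum (A i i / 2) (serreN A i j) (g i) (g j) = 0) (j : J) :
    lift A g hg (fgen A j) = g j := by
  rw [lift, fgen, RingQuot.liftAlgHom_mkAlgHom_apply, FreeAlgebra.lift_ι_apply]

end Lift

section Structure

variable {J : Type} (A : J → J → ℤ)

/-- The quotient map from the free algebra. -/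
def mk : FreeAlgebra KK J →ₐ[KK] Um A := RingQuot.mkAlgHom KK (SerreRel A)

theorem mk_ι (i : J) : mk A (FreeAlgebra.ι KK i) = fgen A i := rfl

theorem mk_surjective : Function.Surjective (mk A) := RingQuot.mkAlgHom_surjective KK _

theorem serreSum_fgen {i j : J} (hij : i ≠ j) :
    serreSum (A i i / 2) (serreN A i j) (fgen A i) (fgen A j) = 0 := by
  rw [← mk_ι, ← mk_ι, ← map_serreSum, ← fSerre_eq_serreSum, mk,
    RingQuot.mkAlgHom_rel KK (SerreRel.serre i j hij), map_zero]

theorem adjoin_range_fgen : Algebra.adjoin KK (Set.range (fgen A)) = ⊤ := by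
  have hrange : Set.range (fgen A) = mk A '' Set.range (FreeAlgebra.ι KK) := Set.range_comp _ _
  rw [hrange, Algebra.adjoin_image, FreeAlgebra.adjoin_range_ι, Algebra.map_top,
    (AlgHom.range_eq_top _).mpr (mk_surjective A)]

variable {A}

theorem linearMap_ext {M : Type*} [AddCommGroup M] [Module KK M] {φ ψ : Um A →ₗ[KK] M}
    (map_one : φ 1 = ψ 1)
    (map_fgen_mul : ∀ i a, φ a = ψ a → φ (fgen A i * a) = ψ (fgen A i * a)) : φ = ψ :=
  LinearMap.ext fun a => mem_of_one_mem_of_gen_mul_mem (S := LinearMap.eqLocus φ ψ)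
    (adjoin_range_fgen A) map_one map_fgen_mul a

variable (A)

/-- The automorphism of `Um A` acting on the weight space of weight `-β` as `q ^ (-(α_i, β))`, that
is, as conjugation by a Cartan generator of the full quantum group. -/
def twist (i : J) : Um A →ₐ[KK] Um A :=
  lift A (fun k => qZ (-(A i k)) • fgen A k) fun _ _ hkj => by
    rw [serreSum_smul, serreSum_fgen A hkj, smul_zero]

/-- The augmentation of `Um A`, killing all generators. -/
def counit : Um A →ₐ[KK] KK :=
  lift A (fun _ => 0) fun _ _ _ => serreSum_zero_right _ _ _

/-- The anti-involution of `Um A` fixing all generators. -/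
def rev : Um A →ₗ[KK] Um A :=
  (MulOpposite.opLinearEquiv KK).symm.toLinearMap ∘ₗ
    (lift A (fun k => MulOpposite.op (fgen A k)) fun _ _ hkj => by
      rw [serreSum_op, serreSum_fgen A hkj, MulOpposite.op_zero, smul_zero]).toLinearMap

theorem twist_fgen (i k : J) : twist A i (fgen A k) = qZ (-(A i k)) • fgen A k :=
  lift_fgen A _ _ k

theorem counit_fgen (k : J) : counit A (fgen A k) = 0 := lift_fgen A _ _ k

theorem counit_twist (i : J) (a : Um A) : counit A (twist A i a) = counit A a := by
  have h : ((counit A).comp (twist A i)).toLinearMap = (counit A).toLinearMap :=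
    linearMap_ext (by simp) fun k a _ => by simp [twist_fgen, counit_fgen]
  exact LinearMap.congr_fun h a

theorem rev_fgen (k : J) : rev A (fgen A k) = fgen A k :=
  congrArg MulOpposite.unop (lift_fgen A _ _ k)

theorem rev_one : rev A 1 = 1 := congrArg MulOpposite.unop (map_one (lift A _ _))

theorem rev_mul (a b : Um A) : rev A (a * b) = rev A b * rev A a :=
  congrArg MulOpposite.unop (map_mul (lift A _ _) a b)

theorem rev_rev (a : Um A) : rev A (rev A a) = a := by
  have h : rev A ∘ₗ rev A = LinearMap.id := linearMap_ext (by simp [rev_one]) fun i a ha => by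
    simpa [rev_mul, rev_fgen] using congrArg (fgen A i * ·) ha
  exact LinearMap.congr_fun h a

theorem rev_twist (i : J) (a : Um A) : rev A (twist A i a) = twist A i (rev A a) := by
  have h : rev A ∘ₗ (twist A i).toLinearMap = (twist A i).toLinearMap ∘ₗ rev A :=
    linearMap_ext (by simp [rev_one]) fun k a ha => by
      simpa [rev_mul, rev_fgen, twist_fgen] using congrArg (qZ (-(A i k)) • · * fgen A k) ha
  exact LinearMap.congr_fun h a

end Structure

end Um

section SkewDerivations

open Um

variable {A : I → I → ℤ} {E Es : I → Module.End KK (Um A)}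

namespace EprimRel

theorem apply_fgen (hE : EprimRel A E) (i j : I) : E i (fgen A j) = if i = j then 1 else 0 := by
  simpa [hE.1] using hE.2 i j 1

theorem apply_mul (hE : EprimRel A E) (i : I) (a b : Um A) :
    E i (a * b) = E i a * b + twist A i a * E i b := by
  have h : E i ∘ₗ LinearMap.mulRight KK b =
      LinearMap.mulRight KK b ∘ₗ E i +
        LinearMap.mulRight KK (E i b) ∘ₗ (twist A i).toLinearMap := by
    refine linearMap_ext (by simp [hE.1]) fun j a ha => ?_
    simp only [LinearMap.comp_apply, LinearMap.add_apply, LinearMap.mulRight_apply,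
      AlgHom.toLinearMap_apply] at ha ⊢
    rw [mul_assoc, hE.2, ha, hE.2, map_mul, twist_fgen]
    simp only [add_mul, mul_add, smul_mul_assoc, mul_assoc, smul_add, ite_mul, zero_mul, add_assoc]
  exact LinearMap.congr_fun h a

theorem apply_twist (hE : EprimRel A E) (i j : I) (a : Um A) :
    E i (twist A j a) = qZ (-(A j i)) • twist A j (E i a) := by
  have h : E i ∘ₗ (twist A j).toLinearMap =
      qZ (-(A j i)) • (twist A j).toLinearMap ∘ₗ E i := by
    refine linearMap_ext (by simp [hE.1]) fun k a ha => ?_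
    simp only [LinearMap.comp_apply, LinearMap.smul_apply, AlgHom.toLinearMap_apply] at ha ⊢
    rw [map_mul, twist_fgen, smul_mul_assoc, map_smul, hE.2, ha, hE.2]
    simp only [map_add, map_smul, map_mul, twist_fgen, mul_smul_comm, smul_mul_assoc,
      apply_ite (twist A j), map_zero]
    split_ifs with hik
    · rw [hik]
    · simp only [zero_add, smul_smul, mul_assoc, mul_comm, mul_left_comm]
  exact LinearMap.congr_fun h a

end EprimRel

namespace EstarRel

theorem eprimRel_conj_rev (hEs : EstarRel A Es) :
    EprimRel A fun i => rev A ∘ₗ Es i ∘ₗ rev A := by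
  refine ⟨fun i => ?_, fun i j a => ?_⟩
  · simp only [LinearMap.comp_apply, rev_one, hEs.1, map_zero]
  · simp only [LinearMap.comp_apply, rev_mul, rev_fgen, hEs.2, map_add, map_smul]
    split_ifs <;> simp only [rev_rev, map_zero]

theorem apply_fgen (hEs : EstarRel A Es) (i j : I) :
    Es i (fgen A j) = if i = j then 1 else 0 := by
  simpa [hEs.1] using hEs.2 i j 1

theorem apply_mul (hEs : EstarRel A Es) (i : I) (a b : Um A) :
    Es i (a * b) = a * Es i b + Es i a * twist A i b := by
  have h := congrArg (rev A) (hEs.eprimRel_conj_rev.apply_mul i (rev A b) (rev A a))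
  simpa only [LinearMap.comp_apply, ← rev_mul, rev_rev, map_add, ← rev_twist] using h

theorem apply_twist (hEs : EstarRel A Es) (i j : I) (a : Um A) :
    Es i (twist A j a) = qZ (-(A j i)) • twist A j (Es i a) := by
  have h := congrArg (rev A) (hEs.eprimRel_conj_rev.apply_twist i j (rev A a))
  simpa only [LinearMap.comp_apply, map_smul, rev_twist, rev_rev] using h

end EstarRel

theorem EprimRel.commute_estar (hA : ∀ i j, A i j = A j i) (hE : EprimRel A E)
    (hEs : EstarRel A Es) (i j : I) (a : Um A) : E i (Es j a) = Es j (E i a) := by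
  have h : E i ∘ₗ Es j = Es j ∘ₗ E i := by
    refine linearMap_ext (by simp [hE.1, hEs.1]) fun k a ha => ?_
    simp only [LinearMap.comp_apply] at ha ⊢
    rw [hEs.apply_mul, hE.2, hEs.apply_fgen, map_add, map_add, hE.2, map_smul, hEs.apply_mul, ha,
      hEs.apply_fgen]
    have htwist : E i ((if j = k then 1 else 0) * twist A j a) =
        qZ (-(A i k)) • ((if j = k then 1 else 0) * twist A j (E i a)) := by
      by_cases hjk : j = k
      · subst hjk
        simp only [if_pos, one_mul, hE.apply_twist, hA i j]
      · simp only [if_neg hjk, zero_mul, map_zero, smul_zero]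
    rw [htwist, smul_add, add_assoc, apply_ite (Es j), map_zero]
  exact LinearMap.congr_fun h a

theorem counit_eprim_eq_counit_estar (hE : EprimRel A E) (hEs : EstarRel A Es) (i : I)
    (a : Um A) : counit A (E i a) = counit A (Es i a) := by
  have h : (counit A).toLinearMap ∘ₗ E i = (counit A).toLinearMap ∘ₗ Es i := by
    refine linearMap_ext (by simp [hE.1, hEs.1]) fun k a _ => ?_
    simp [hE.2, hEs.apply_mul, hEs.apply_fgen, counit_fgen, counit_twist, apply_ite (counit A)]
  exact LinearMap.congr_fun h a

end SkewDerivations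

section RootLattice

variable {J : Type*}

/-- The root lattice, the free abelian group on the simple roots. -/
abbrev RootLattice (J : Type*) : Type _ := J →₀ ℤ

/-- The simple root `α_i`. -/
def simpleRoot (i : J) : RootLattice J := Finsupp.single i 1

/-- The height of an element of the root lattice: the sum of its coordinates. -/
def height : RootLattice J →ₗ[ℤ] ℤ := Finsupp.linearCombination ℤ fun _ => 1

/-- The bilinear form on the root lattice with Gram matrix `A`. -/
def rootForm (A : J → J → ℤ) : RootLattice J →ₗ[ℤ] RootLattice J →ₗ[ℤ] ℤ :=
  Finsupp.linearCombination ℤ fun i => Finsupp.linearCombination ℤ (A i)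

/-- The pairing `β ↦ (β, 2ρ)`, where `2ρ` is characterised by `(α_i, 2ρ) = (α_i, α_i)`. -/
def twoRho (A : J → J → ℤ) : RootLattice J →ₗ[ℤ] ℤ := Finsupp.linearCombination ℤ fun i => A i i

theorem height_simpleRoot (i : J) : height (simpleRoot i) = 1 := by
  simp [height, simpleRoot]

theorem height_sum_map_simpleRoot (L : List J) : height (L.map simpleRoot).sum = L.length := by
  induction L with
  | nil => simp
  | cons i L ih => simp [ih, height_simpleRoot, add_comm]

theorem height_nonneg {β : RootLattice J} (hβ : 0 ≤ β) : 0 ≤ height β :=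
  Finsupp.sum_nonneg fun i _ => by simpa using hβ i

theorem rootForm_simpleRoot_simpleRoot (A : J → J → ℤ) (i j : J) :
    rootForm A (simpleRoot i) (simpleRoot j) = A i j := by
  simp [rootForm, simpleRoot]

theorem rootForm_comm {A : J → J → ℤ} (hA : ∀ i j, A i j = A j i) (β γ : RootLattice J) :
    rootForm A β γ = rootForm A γ β := by
  have h : rootForm A = (rootForm A).flip := Finsupp.lhom_ext' fun i => by
    ext j
    simpa [rootForm] using hA i j
  exact LinearMap.congr_fun₂ h β γ

theorem twoRho_simpleRoot (A : J → J → ℤ) (i : J) : twoRho A (simpleRoot i) = A i i := by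
  simp [twoRho, simpleRoot]

theorem twoRho_pos {A : J → J → ℤ} (hA : ∀ i, 0 < A i i) {β : RootLattice J} (hβ : 0 ≤ β)
    (hβ0 : β ≠ 0) : 0 < twoRho A β := by
  refine Finset.sum_pos (fun i hi => mul_pos ?_ (hA i)) (Finsupp.support_nonempty_iff.mpr hβ0)
  exact lt_of_le_of_ne (hβ i) (Finsupp.mem_support_iff.mp hi).symm

theorem rootForm_self_nonpos {A : J → J → ℤ} {β : RootLattice J} (hβ : 0 ≤ β)
    (hroot : ∀ i, rootForm A (simpleRoot i) β ≤ 0) : rootForm A β β ≤ 0 := by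
  have h : rootForm A β β = β.sum fun i n => n * rootForm A (simpleRoot i) β := by
    conv_lhs => enter [1]; rw [rootForm, Finsupp.linearCombination_apply]
    simp [Finsupp.sum, rootForm, simpleRoot, LinearMap.sum_apply]
  rw [h]
  exact Finset.sum_nonpos fun i _ => mul_nonpos_of_nonneg_of_nonpos (hβ i) (hroot i)

end RootLattice

section WeightSpace

/-- The span of the monomials of weight `β` in a family `f`, where `f i` is given weight `α_i`. In
`Um A` this is the usual weight space of weight `-β`. Weights are taken in the whole root lattice so
that they can be subtracted. -/
def weightSpace (R : Type*) {J C : Type*} [CommSemiring R] [Semiring C] [Algebra R C] (f : J → C)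
    (β : RootLattice J) : Submodule R C :=
  Submodule.span R {x | ∃ L : List J, (L.map simpleRoot).sum = β ∧ (L.map f).prod = x}

variable {J R C : Type*} [CommSemiring R] [Semiring C] [Algebra R C] {f : J → C}

theorem weightSpace_le {S : RootLattice J → Submodule R C} (one_mem : 1 ∈ S 0)
    (gen_mul_mem : ∀ i β, ∀ a ∈ weightSpace R f β, a ∈ S β → f i * a ∈ S (simpleRoot i + β))
    (β : RootLattice J) :
    weightSpace R f β ≤ S β := by
  refine Submodule.span_le.mpr ?_
  rintro _ ⟨L, rfl, rfl⟩
  induction L with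
  | nil => exact one_mem
  | cons i L ih => simpa using gen_mul_mem i _ _ (Submodule.subset_span ⟨L, rfl, rfl⟩) ih

theorem one_mem_weightSpace : 1 ∈ weightSpace R f 0 := Submodule.subset_span ⟨[], rfl, rfl⟩

theorem gen_mul_mem_weightSpace (i : J) {β : RootLattice J} {a : C} (ha : a ∈ weightSpace R f β) :
    f i * a ∈ weightSpace R f (simpleRoot i + β) := by
  suffices h : weightSpace R f β ≤
      (weightSpace R f (simpleRoot i + β)).comap (LinearMap.mulLeft R (f i)) from h ha
  refine Submodule.span_le.mpr ?_
  rintro _ ⟨L, rfl, rfl⟩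
  exact Submodule.subset_span ⟨i :: L, by simp, by simp⟩

theorem mul_gen_mem_weightSpace (i : J) {β : RootLattice J} {a : C} (ha : a ∈ weightSpace R f β) :
    a * f i ∈ weightSpace R f (β + simpleRoot i) := by
  suffices h : weightSpace R f β ≤
      (weightSpace R f (β + simpleRoot i)).comap (LinearMap.mulRight R (f i)) from h ha
  refine Submodule.span_le.mpr ?_
  rintro _ ⟨L, rfl, rfl⟩
  exact Submodule.subset_span ⟨L ++ [i], by simp, by simp⟩

theorem gen_mem_weightSpace (i : J) : f i ∈ weightSpace R f (simpleRoot i) := by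
  simpa using gen_mul_mem_weightSpace i (one_mem_weightSpace (R := R) (f := f))

theorem iSup_weightSpace_eq_top (hf : Algebra.adjoin R (Set.range f) = ⊤) :
    ⨆ β, weightSpace R f β = ⊤ := by
  refine eq_top_iff.mpr fun a _ => mem_of_one_mem_of_gen_mul_mem hf
    (Submodule.mem_iSup_of_mem 0 one_mem_weightSpace) (fun i a ha => ?_) a
  suffices h : ⨆ β, weightSpace R f β ≤
      (⨆ β, weightSpace R f β).comap (LinearMap.mulLeft R (f i)) from h ha
  exact iSup_le fun β a ha => Submodule.mem_iSup_of_mem _ (gen_mul_mem_weightSpace i ha)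

theorem map_weightSpace {D : Type*} [Semiring D] [Algebra R D] (φ : C →ₐ[R] D)
    (β : RootLattice J) : (weightSpace R f β).map φ.toLinearMap = weightSpace R (φ ∘ f) β := by
  rw [weightSpace, weightSpace, Submodule.map_span]
  congr 1
  ext y
  simp [map_list_prod]

theorem weightSpace_eq_bot {β : RootLattice J} (hβ : ¬ 0 ≤ β) : weightSpace R f β = ⊥ := by
  refine eq_bot_iff.mpr (Submodule.span_le.mpr ?_)
  rintro _ ⟨L, rfl, rfl⟩
  exact absurd (List.sum_nonneg fun _ hx => by
    obtain ⟨i, _, rfl⟩ := List.mem_map.mp hx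
    exact Finsupp.single_nonneg.mpr zero_le_one) hβ

theorem weightSpace_zero : weightSpace R f 0 = Submodule.span R {1} := by
  refine le_antisymm (Submodule.span_mono ?_) (by simpa using one_mem_weightSpace)
  rintro _ ⟨L, hL, rfl⟩
  have hlength := height_sum_map_simpleRoot L
  rw [hL, map_zero, eq_comm, Nat.cast_eq_zero, List.length_eq_zero_iff] at hlength
  simp [hlength]

end WeightSpace

section WeightsOfOperators

namespace Um

variable {J : Type} {A : J → J → ℤ} {β : RootLattice J} {a : Um A}

theorem twist_of_mem_weightSpace (i : J) (ha : a ∈ weightSpace KK (fgen A) β) :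
    twist A i a = qZ (-rootForm A (simpleRoot i) β) • a := by
  refine weightSpace_le (S := fun β => LinearMap.eqLocus (twist A i).toLinearMap
    (qZ (-rootForm A (simpleRoot i) β) • LinearMap.id)) (by simp [qZ_zero])
    (fun k β a _ ha => ?_) β ha
  have ha' : twist A i a = qZ (-rootForm A (simpleRoot i) β) • a := ha
  simp [twist_fgen, ha', rootForm_simpleRoot_simpleRoot, smul_smul, qZ_add]

theorem rev_mem_weightSpace (ha : a ∈ weightSpace KK (fgen A) β) :
    rev A a ∈ weightSpace KK (fgen A) β := by
  refine weightSpace_le (S := fun β => (weightSpace KK (fgen A) β).comap (rev A))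
    (by simpa [rev_one] using one_mem_weightSpace) (fun k β a _ ha => ?_) β ha
  rw [Submodule.mem_comap, rev_mul, rev_fgen, add_comm]
  exact mul_gen_mem_weightSpace k ha

theorem counit_of_mem_weightSpace (ha : a ∈ weightSpace KK (fgen A) β) (hβ : β ≠ 0) :
    counit A a = 0 := by
  have h : a ∈ ⨅ _ : β ≠ 0, LinearMap.ker (counit A).toLinearMap :=
    weightSpace_le (S := fun β => ⨅ _ : β ≠ 0, LinearMap.ker (counit A).toLinearMap) (by simp)
      (fun k β a _ _ => by simp [counit_fgen]) β ha
  simpa [hβ] using h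

end Um

open Um

theorem EprimRel.apply_mem_weightSpace {A : I → I → ℤ} {E : I → Module.End KK (Um A)}
    (hE : EprimRel A E) (i : I) {β : RootLattice I} {a : Um A}
    (ha : a ∈ weightSpace KK (fgen A) β) : E i a ∈ weightSpace KK (fgen A) (β - simpleRoot i) := by
  refine weightSpace_le (S := fun β => (weightSpace KK (fgen A) (β - simpleRoot i)).comap (E i))
    (by simp [hE.1]) (fun k β a ha hEa => ?_) β ha
  rw [Submodule.mem_comap, hE.2]
  refine add_mem ?_ (Submodule.smul_mem _ _ ?_)
  · split_ifs with hik
    · simpa [hik] using ha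
    · exact zero_mem _
  · rw [add_sub_assoc]
    exact gen_mul_mem_weightSpace k hEa

theorem EstarRel.apply_mem_weightSpace {A : I → I → ℤ} {Es : I → Module.End KK (Um A)}
    (hEs : EstarRel A Es) (i : I) {β : RootLattice I} {a : Um A}
    (ha : a ∈ weightSpace KK (fgen A) β) : Es i a ∈ weightSpace KK (fgen A) (β - simpleRoot i) := by
  simpa only [LinearMap.comp_apply, rev_rev] using rev_mem_weightSpace
    (hEs.eprimRel_conj_rev.apply_mem_weightSpace i (rev_mem_weightSpace ha))

end WeightsOfOperators

section Antipode

variable {J : Type} (A : J → J → ℤ)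

/-- The scalar by which the antipode differs from `rev` on the weight space of weight `-β`. The
integer division is exact when the diagonal of `A` is even. -/
def antipodeScalar (β : RootLattice J) : KK :=
  (-1) ^ height β * qZ (-((rootForm A β β - twoRho A β) / 2))

variable {A}

theorem antipodeScalar_zero : antipodeScalar A 0 = 1 := by simp [antipodeScalar, qZ_zero]

theorem antipodeScalar_simpleRoot_add (hA : ∀ i j, A i j = A j i) (i : J) (β : RootLattice J) :
    antipodeScalar A (simpleRoot i + β) =
      -(qZ (-rootForm A (simpleRoot i) β) * antipodeScalar A β) := by
  have hnorm : rootForm A (simpleRoot i + β) (simpleRoot i + β) - twoRho A (simpleRoot i + β) =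
      rootForm A β β - twoRho A β + rootForm A (simpleRoot i) β * 2 := by
    simp only [map_add, LinearMap.add_apply, rootForm_simpleRoot_simpleRoot, twoRho_simpleRoot,
      rootForm_comm hA β (simpleRoot i)]
    ring
  rw [antipodeScalar, antipodeScalar, hnorm, Int.add_mul_ediv_right _ _ two_ne_zero, neg_add,
    qZ_add, map_add, height_simpleRoot, zpow_add₀ (neg_ne_zero.mpr one_ne_zero), zpow_one]
  ring

theorem twoRho_le_of_antipodeScalar_sq_eq_one {β : RootLattice J}
    (h : antipodeScalar A β ^ 2 = 1) : twoRho A β ≤ rootForm A β β := by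
  have hsign : ((-1 : KK) ^ height β) ^ 2 = 1 := by
    rw [← zpow_natCast, ← zpow_mul]
    exact Even.neg_one_zpow (even_two.mul_left _)
  rw [antipodeScalar, mul_pow, hsign, one_mul, qZ_pow, qZ_eq_one_iff] at h
  push_cast at h
  omega

namespace Um

variable (A)

/-- The grading of `Um A` by the root lattice, as a coaction. -/
def grade : Um A →ₐ[KK] AddMonoidAlgebra (Um A) (RootLattice J) :=
  lift A (fun k => AddMonoidAlgebra.single (simpleRoot k) (fgen A k)) fun _ _ hkj => by
    rw [serreSum_single, serreSum_fgen A hkj, AddMonoidAlgebra.single_zero]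

/-- The antipode of the twisted bialgebra `Um A`. -/
def antipode : Um A →ₗ[KK] Um A :=
  rev A ∘ₗ Finsupp.lsum KK (fun γ => antipodeScalar A γ • LinearMap.id) ∘ₗ
    (AddMonoidAlgebra.coeffLinearEquiv KK).toLinearMap ∘ₗ (grade A).toLinearMap

variable {A}

theorem linearMap_ext_weightSpace {M : Type*} [AddCommGroup M] [Module KK M]
    {φ ψ : Um A →ₗ[KK] M} (h : ∀ β, ∀ a ∈ weightSpace KK (fgen A) β, φ a = ψ a) : φ = ψ :=
  LinearMap.eqLocus_eq_top.mp <| eq_top_iff.mpr <|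
    (iSup_weightSpace_eq_top (adjoin_range_fgen A)).ge.trans (iSup_le h)

theorem grade_of_mem_weightSpace {β : RootLattice J} {a : Um A}
    (ha : a ∈ weightSpace KK (fgen A) β) : grade A a = AddMonoidAlgebra.single β a := by
  refine weightSpace_le (S := fun β => LinearMap.eqLocus (grade A).toLinearMap
    (AddMonoidAlgebra.lsingle β)) (map_one (grade A)) (fun k β a _ ha => ?_) β ha
  have ha' : grade A a = AddMonoidAlgebra.single β a := ha
  have hk : grade A (fgen A k) = AddMonoidAlgebra.single (simpleRoot k) (fgen A k) :=
    lift_fgen A _ _ k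
  simp [hk, ha', AddMonoidAlgebra.single_mul_single]

theorem antipode_of_mem_weightSpace {β : RootLattice J} {a : Um A}
    (ha : a ∈ weightSpace KK (fgen A) β) : antipode A a = antipodeScalar A β • rev A a := by
  simp [antipode, grade_of_mem_weightSpace ha]

theorem antipode_one : antipode A 1 = 1 := by
  rw [antipode_of_mem_weightSpace one_mem_weightSpace, antipodeScalar_zero, one_smul, rev_one]

theorem antipode_fgen_mul (hA : ∀ i j, A i j = A j i) (i : J) (a : Um A) :
    antipode A (fgen A i * a) = -(antipode A (twist A i a) * fgen A i) := by
  have h : antipode A ∘ₗ LinearMap.mulLeft KK (fgen A i) =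
      -(LinearMap.mulRight KK (fgen A i) ∘ₗ antipode A ∘ₗ (twist A i).toLinearMap) :=
    linearMap_ext_weightSpace fun β a ha => by
      simp only [LinearMap.comp_apply, LinearMap.neg_apply, LinearMap.mulLeft_apply,
        LinearMap.mulRight_apply, AlgHom.toLinearMap_apply]
      rw [antipode_of_mem_weightSpace (gen_mul_mem_weightSpace i ha), rev_mul, rev_fgen,
        twist_of_mem_weightSpace i ha, map_smul, antipode_of_mem_weightSpace ha,
        antipodeScalar_simpleRoot_add hA, smul_smul, smul_mul_assoc]
      exact neg_smul (M := Um A) _ _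
  exact LinearMap.congr_fun h a

end Um

end Antipode

section Existence

open Um

variable {J : Type} {A : J → J → ℤ}

/-- The form `(w, a) ↦ ε (e'_{i_n} ⋯ e'_{i_1} a)` for a word `w = i_1 ⋯ i_n`, before passing to the
quotient in the first variable. -/
def preForm (E : J → Module.End KK (Um A)) : FreeAlgebra KK J →ₗ[KK] Um A →ₗ[KK] KK :=
  LinearMap.compRight KK (counit A).toLinearMap ∘ₗ
    (MulOpposite.opLinearEquiv KK).symm.toLinearMap ∘ₗ
      (FreeAlgebra.lift KK fun i => MulOpposite.op (E i)).toLinearMap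

theorem preForm_one (E : J → Module.End KK (Um A)) (a : Um A) : preForm E 1 a = counit A a := by
  simp [preForm]

theorem preForm_ι_mul (E : J → Module.End KK (Um A)) (i : J) (w : FreeAlgebra KK J) (a : Um A) :
    preForm E (FreeAlgebra.ι KK i * w) a = preForm E w (E i a) := by
  simp [preForm]

variable {A : I → I → ℤ} {E : I → Module.End KK (Um A)}

theorem preForm_apply_one (hE : EprimRel A E) (w : FreeAlgebra KK I) :
    preForm E w 1 = counit A (mk A w) := by
  refine mem_of_one_mem_of_gen_mul_mem (FreeAlgebra.adjoin_range_ι KK I)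
    (S := LinearMap.eqLocus ((preForm E).flip 1) ((counit A).comp (mk A)).toLinearMap)
    (by simp [preForm_one]) (fun i w _ => ?_) w
  simp [preForm_ι_mul, hE.1, mk_ι, counit_fgen]

theorem exists_preForm_apply_fgen_mul (hA : ∀ i j, A i j = A j i) (hE : EprimRel A E) (i : I)
    (w : FreeAlgebra KK I) :
    ∃ w', mk A w' = E i (mk A w) ∧ ∀ a, preForm E w (fgen A i * a) = preForm E w' a := by
  let S : Submodule KK (FreeAlgebra KK I) :=
    { carrier := {w | ∃ w', mk A w' = E i (mk A w) ∧
        ∀ a, preForm E w (fgen A i * a) = preForm E w' a}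
      zero_mem' := ⟨0, by simp⟩
      add_mem' := by
        rintro v w ⟨v', hv, hv'⟩ ⟨w', hw, hw'⟩
        exact ⟨v' + w', by simp [hv, hw], by simp [hv', hw']⟩
      smul_mem' := by
        rintro c w ⟨w', hw, hw'⟩
        exact ⟨c • w', by simp [hw], by simp [hw']⟩ }
  refine mem_of_one_mem_of_gen_mul_mem (FreeAlgebra.adjoin_range_ι KK I) (S := S)
    ⟨0, by simp [hE.1], by simp [preForm_one, counit_fgen]⟩ ?_ w
  rintro j w ⟨w', hw, hw'⟩
  refine ⟨(if i = j then w else 0) + qZ (-A i j) • (FreeAlgebra.ι KK j * w'), ?_, fun a => ?_⟩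
  · rw [map_add, map_smul, map_mul, map_mul, mk_ι, hE.2, hw, apply_ite (mk A), map_zero]
  · rw [preForm_ι_mul, hE.2, map_add, map_smul, hw', hA j i]
    by_cases hij : i = j
    · simp [hij, preForm_ι_mul]
    · simp [hij, Ne.symm hij, preForm_ι_mul]

theorem ker_mk_le_ker_preForm (hA : ∀ i j, A i j = A j i) (hE : EprimRel A E) :
    LinearMap.ker (mk A).toLinearMap ≤ LinearMap.ker (preForm E) := by
  suffices h : ∀ a, a ∈ ⨅ w ∈ LinearMap.ker (mk A).toLinearMap, LinearMap.ker (preForm E w) from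
    fun w hw => LinearMap.ext fun a => by
      simpa using (Submodule.mem_iInf _).mp ((Submodule.mem_iInf _).mp (h a) w) hw
  refine mem_of_one_mem_of_gen_mul_mem (adjoin_range_fgen A) ?_ fun i a ha => ?_
  · simp +contextual [preForm_apply_one hE]
  · simp only [Submodule.mem_iInf, LinearMap.mem_ker, AlgHom.toLinearMap_apply] at ha ⊢
    intro w hw
    obtain ⟨w', hw', hpre⟩ := exists_preForm_apply_fgen_mul hA hE i w
    rw [hpre, ha w' (by rw [hw', hw, map_zero])]

theorem exists_mk_eq_preForm (hA : ∀ i j, A i j = A j i) (hE : EprimRel A E) :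
    ∃ B : Um A →ₗ[KK] Um A →ₗ[KK] KK, ∀ w, B (mk A w) = preForm E w := by
  obtain ⟨s, hs⟩ := LinearMap.exists_rightInverse_of_surjective (mk A).toLinearMap
    (LinearMap.range_eq_top.mpr (mk_surjective A))
  refine ⟨preForm E ∘ₗ s, fun w => sub_eq_zero.mp ?_⟩
  rw [LinearMap.comp_apply, ← map_sub]
  refine ker_mk_le_ker_preForm hA hE ?_
  rw [LinearMap.mem_ker, map_sub, sub_eq_zero]
  exact LinearMap.congr_fun hs (mk A w)

theorem exists_bilProp (hA : ∀ i j, A i j = A j i) (hE : EprimRel A E) :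
    ∃ B, BilProp A E B := by
  obtain ⟨B, hB⟩ := exists_mk_eq_preForm hA hE
  have one_left (b : Um A) : B 1 b = counit A b := by
    rw [← map_one (mk A), hB, preForm_one]
  have one_right (a : Um A) : B a 1 = counit A a := by
    obtain ⟨w, rfl⟩ := mk_surjective A a
    rw [hB, preForm_apply_one hE]
  have fgen_mul_left (i : I) (a b : Um A) : B (fgen A i * a) b = B a (E i b) := by
    obtain ⟨w, rfl⟩ := mk_surjective A a
    rw [← mk_ι, ← map_mul, hB, hB, preForm_ι_mul]
  have fgen_mul_right (i : I) (a b : Um A) : B (E i a) b = B a (fgen A i * b) := by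
    obtain ⟨w, rfl⟩ := mk_surjective A a
    obtain ⟨w', hw', hpre⟩ := exists_preForm_apply_fgen_mul hA hE i w
    rw [← hw', hB, hB, hpre]
  have symm : B = B.flip := linearMap_ext
    (LinearMap.ext fun b => by rw [LinearMap.flip_apply, one_left, one_right])
    fun i a ha => LinearMap.ext fun b => by
      rw [fgen_mul_left, LinearMap.flip_apply, ← fgen_mul_right, ha, LinearMap.flip_apply]
  exact ⟨B, LinearMap.congr_fun₂ symm, by rw [one_left, map_one], fgen_mul_right⟩

end Existence

namespace BilProp

open Um

variable {A : I → I → ℤ} {E Es : I → Module.End KK (Um A)} {B : Um A →ₗ[KK] Um A →ₗ[KK] KK}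

theorem fgen_mul_left {J : Type} {A : J → J → ℤ} {E : J → Module.End KK (Um A)}
    {B : Um A →ₗ[KK] Um A →ₗ[KK] KK} (hB : BilProp A E B) (i : J) (a b : Um A) :
    B (fgen A i * a) b = B a (E i b) := by
  rw [hB.1, ← hB.2.2, hB.1]

theorem apply_one (hE : EprimRel A E) (hB : BilProp A E B) (a : Um A) : B a 1 = counit A a := by
  have h : B.flip 1 = (counit A).toLinearMap :=
    linearMap_ext (by simpa using hB.2.1) fun i a _ => by
      simp [hB.fgen_mul_left, hE.1, counit_fgen]
  exact LinearMap.congr_fun h a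

theorem unique (hE : EprimRel A E) {B' : Um A →ₗ[KK] Um A →ₗ[KK] KK} (hB : BilProp A E B)
    (hB' : BilProp A E B') : B = B' := by
  refine linearMap_ext (LinearMap.ext fun b => ?_) fun i a ha => LinearMap.ext fun b => ?_
  · rw [hB.1, hB'.1, hB.apply_one hE, hB'.apply_one hE]
  · rw [hB.fgen_mul_left, hB'.fgen_mul_left, ha]

theorem estar_left (hA : ∀ i j, A i j = A j i) (hE : EprimRel A E) (hEs : EstarRel A Es)
    (hB : BilProp A E B) (i : I) (a b : Um A) : B (Es i a) b = B a (b * fgen A i) := by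
  have h : (B ∘ₗ Es i).flip = B.flip ∘ₗ LinearMap.mulRight KK (fgen A i) := by
    refine linearMap_ext (LinearMap.ext fun a => ?_) fun k b ihb => LinearMap.ext fun a => ?_
    · simp only [LinearMap.flip_apply, LinearMap.comp_apply, LinearMap.mulRight_apply, one_mul]
      rw [hB.apply_one hE, ← counit_eprim_eq_counit_estar hE hEs, ← hB.apply_one hE, hB.2.2,
        mul_one]
    · have hb : B (Es i (E k a)) b = B (E k a) (b * fgen A i) := LinearMap.congr_fun ihb (E k a)
      simp only [LinearMap.flip_apply, LinearMap.comp_apply, LinearMap.mulRight_apply]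
      rw [← hB.2.2, hE.commute_estar hA hEs, hb, hB.2.2, mul_assoc]
  exact LinearMap.congr_fun₂ h b a

theorem twist_left (hE : EprimRel A E) (hB : BilProp A E B) (i : I) (a b : Um A) :
    B (twist A i a) b = B a (twist A i b) := by
  have h : B ∘ₗ (twist A i).toLinearMap = B.compl₂ (twist A i).toLinearMap := by
    refine linearMap_ext (LinearMap.ext fun b => ?_) fun k a iha => LinearMap.ext fun b => ?_
    · simp [hB.1 1, hB.apply_one hE, counit_twist]
    · have ha (c : Um A) : B (twist A i a) c = B a (twist A i c) := LinearMap.congr_fun iha c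
      simp [twist_fgen, hB.fgen_mul_left, ha, hE.apply_twist]
  exact LinearMap.congr_fun₂ h a b

theorem apply_eq_zero_of_ne (hE : EprimRel A E) (hB : BilProp A E B) {β γ : RootLattice I}
    (hβγ : β ≠ γ) {a b : Um A} (ha : a ∈ weightSpace KK (fgen A) β)
    (hb : b ∈ weightSpace KK (fgen A) γ) : B a b = 0 := by
  have h : a ∈ ⨅ γ, ⨅ _ : β ≠ γ, (weightSpace KK (fgen A) γ).orthogonalBilin B := by
    refine weightSpace_le (S := fun β => ⨅ γ, ⨅ _ : β ≠ γ,
      (weightSpace KK (fgen A) γ).orthogonalBilin B) ?_ (fun k β a _ ha => ?_) β ha <;>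
      simp only [Submodule.mem_iInf, Submodule.mem_orthogonalBilin_iff] at *
    · intro γ hγ b hb
      rw [hB.apply_one hE, counit_of_mem_weightSpace hb hγ.symm]
    · intro γ hγ b hb
      rw [← hB.2.2]
      exact ha (γ - simpleRoot k) (fun h => hγ (by rw [h, add_sub_cancel])) _
        (hE.apply_mem_weightSpace k hb)
  simp only [Submodule.mem_iInf, Submodule.mem_orthogonalBilin_iff] at h
  rw [hB.1]
  exact h γ hβγ b hb

theorem eprim_mem_ker {J : Type} {A : J → J → ℤ} {E : J → Module.End KK (Um A)}
    {B : Um A →ₗ[KK] Um A →ₗ[KK] KK} (hB : BilProp A E B) (i : J) {a : Um A}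
    (ha : a ∈ LinearMap.ker B) : E i a ∈ LinearMap.ker B :=
  LinearMap.ext fun b => by
    rw [hB.2.2, LinearMap.mem_ker.mp ha, LinearMap.zero_apply, LinearMap.zero_apply]

theorem estar_mem_ker (hA : ∀ i j, A i j = A j i) (hE : EprimRel A E) (hEs : EstarRel A Es)
    (hB : BilProp A E B) (i : I) {a : Um A} (ha : a ∈ LinearMap.ker B) :
    Es i a ∈ LinearMap.ker B :=
  LinearMap.ext fun b => by
    rw [hB.estar_left hA hE hEs, LinearMap.mem_ker.mp ha, LinearMap.zero_apply,
      LinearMap.zero_apply]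

theorem disjoint_iSup_weightSpace_ker (hE : EprimRel A E) (hB : BilProp A E B)
    {s : Set (RootLattice I)}
    (hs : ∀ γ ∈ s, Disjoint (weightSpace KK (fgen A) γ) (LinearMap.ker B)) :
    Disjoint (⨆ γ : s, weightSpace KK (fgen A) (γ : RootLattice I)) (LinearMap.ker B) := by
  refine Submodule.disjoint_def.mpr fun x hx hxB => ?_
  obtain ⟨f, hf, rfl⟩ := (Submodule.mem_iSup_iff_exists_finsupp _ _).mp hx
  have component_mem_ker (γ : s) : f γ ∈ LinearMap.ker B := by
    refine linearMap_ext_weightSpace fun δ b hb => ?_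
    by_cases hγδ : (γ : RootLattice I) = δ
    · have hsum : B (f.sum fun _ y => y) b = B (f γ) b := by
        rw [Finsupp.sum, map_sum, LinearMap.sum_apply]
        refine Finset.sum_eq_single γ (fun γ' _ hγ' => ?_) fun hγ => ?_
        · exact hB.apply_eq_zero_of_ne hE (fun h => hγ' (Subtype.ext (h.trans hγδ.symm)))
            (hf γ') hb
        · rw [Finsupp.notMem_support_iff.mp hγ, map_zero, LinearMap.zero_apply]
      rw [← hsum, LinearMap.mem_ker.mp hxB]
    · exact hB.apply_eq_zero_of_ne hE hγδ (hf γ) hb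
  exact Finset.sum_eq_zero fun γ _ =>
    Submodule.disjoint_def.mp (hs γ γ.2) _ (hf γ) (component_mem_ker γ)

end BilProp

section TensorNondegenerate

open TensorProduct LinearMap
open LinearMap (BilinForm)

variable {K V W : Type*} [Field K] [AddCommGroup V] [Module K V] [AddCommGroup W] [Module K W]

theorem disjoint_range_mapIncl_ker_tmul {B : BilinForm K V} {B' : BilinForm K W}
    {L : Submodule K V} {M : Submodule K W} (hL : Disjoint L (ker B)) (hM : Disjoint M (ker B')) :
    Disjoint (range (mapIncl L M)) (ker (BilinForm.tmul B B')) := by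
  classical
  refine Submodule.disjoint_def.mpr ?_
  rintro _ ⟨s, rfl⟩ hs
  let b := Module.Basis.ofVectorSpace K M
  obtain ⟨g, rfl⟩ := (equivFinsuppOfBasisRight (M := L) b).symm.surjective s
  rw [equivFinsuppOfBasisRight_symm_apply] at hs ⊢
  have apply_coeff (v : V) : (g.sum fun k x => B x v • b k) = 0 :=
    Subtype.ext <| Submodule.disjoint_def.mp hM _ (Submodule.coe_mem _) <| LinearMap.ext fun w => by
      simpa [Finsupp.sum, mul_comm] using LinearMap.congr_fun hs (v ⊗ₜ w)
  have coeff_mem_ker (k) : (g k : V) ∈ ker B := LinearMap.ext fun v => by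
    by_cases hk : k ∈ g.support
    · exact linearIndependent_iff'.mp b.linearIndependent g.support _ (apply_coeff v) k hk
    · simp [Finsupp.notMem_support_iff.mp hk]
  have hg : g = 0 := Finsupp.ext fun k =>
    Subtype.ext (Submodule.disjoint_def.mp hL _ (g k).2 (coeff_mem_ker k))
  rw [hg, Finsupp.sum_zero_index, map_zero]

end TensorNondegenerate

section Coproduct

open Um TensorProduct

variable {J : Type} (A : J → J → ℤ)

/-- Left multiplication by the coproduct `f_i ⊗ 1 + 1 ⊗ f_i` of a generator in the tensor square of
`Um A` with its twisted multiplication. -/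
def coproductStep (i : J) : Module.End KK (Um A ⊗[KK] Um A) :=
  TensorProduct.map (LinearMap.mulLeft KK (fgen A i)) LinearMap.id +
    TensorProduct.map (twist A i).toLinearMap (LinearMap.mulLeft KK (fgen A i))

/-- The coproduct of the twisted bialgebra `Um A`, on the free algebra. -/
def coproduct : FreeAlgebra KK J →ₗ[KK] Um A ⊗[KK] Um A :=
  LinearMap.applyₗ (1 ⊗ₜ 1) ∘ₗ (FreeAlgebra.lift KK (coproductStep A)).toLinearMap

theorem coproductStep_tmul (i : J) (a b : Um A) :
    coproductStep A i (a ⊗ₜ b) = (fgen A i * a) ⊗ₜ b + twist A i a ⊗ₜ (fgen A i * b) := rfl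

theorem coproduct_one : coproduct A 1 = 1 ⊗ₜ 1 := by simp [coproduct]

theorem coproduct_ι_mul (i : J) (w : FreeAlgebra KK J) :
    coproduct A (FreeAlgebra.ι KK i * w) = coproductStep A i (coproduct A w) := by
  simp [coproduct]

variable {A}

theorem lift_antipode_coproduct (hA : ∀ i j, A i j = A j i) (w : FreeAlgebra KK J) :
    TensorProduct.lift (LinearMap.mul KK (Um A) ∘ₗ antipode A) (coproduct A w) =
      algebraMap KK (Um A) (counit A (mk A w)) := by
  have lift_coproductStep (i : J) (t : Um A ⊗[KK] Um A) :
      TensorProduct.lift (LinearMap.mul KK (Um A) ∘ₗ antipode A) (coproductStep A i t) = 0 := by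
    induction t with
    | zero => simp only [map_zero]
    | add t t' ht ht' => rw [map_add, map_add, ht, ht', add_zero]
    | tmul a b =>
      simp [coproductStep_tmul, antipode_fgen_mul hA, mul_assoc]
  refine mem_of_one_mem_of_gen_mul_mem (FreeAlgebra.adjoin_range_ι KK J)
    (S := LinearMap.eqLocus (TensorProduct.lift (LinearMap.mul KK (Um A) ∘ₗ antipode A) ∘ₗ
      coproduct A) (Algebra.linearMap KK (Um A) ∘ₗ ((counit A).comp (mk A)).toLinearMap))
    ?_ (fun i w _ => ?_) w
  · simp [coproduct_one, antipode_one]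
  · simp [coproduct_ι_mul, lift_coproductStep, mk_ι, counit_fgen]

/-- The span of the weight spaces of height less than `n`. -/
def heightLT (A : J → J → ℤ) (n : ℤ) : Submodule KK (Um A) :=
  ⨆ γ : {γ : RootLattice J | height γ < n}, weightSpace KK (fgen A) (γ : RootLattice J)

theorem weightSpace_le_heightLT {n : ℤ} {γ : RootLattice J} (h : height γ < n) :
    weightSpace KK (fgen A) γ ≤ heightLT A n :=
  le_iSup (fun γ : {γ : RootLattice J | height γ < n} =>
    weightSpace KK (fgen A) (γ : RootLattice J)) ⟨γ, h⟩

theorem heightLT_le {n : ℤ} {S : Submodule KK (Um A)}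
    (h : ∀ γ, height γ < n → weightSpace KK (fgen A) γ ≤ S) : heightLT A n ≤ S :=
  iSup_le fun γ => h γ γ.2

theorem heightLT_le_heightLT_add_one (n : ℤ) : heightLT A n ≤ heightLT A (n + 1) :=
  heightLT_le fun _ hγ => weightSpace_le_heightLT (hγ.trans (lt_add_one n))

theorem fgen_mul_mem_heightLT (i : J) {n : ℤ} {a : Um A} (ha : a ∈ heightLT A n) :
    fgen A i * a ∈ heightLT A (n + 1) := by
  suffices h : heightLT A n ≤ (heightLT A (n + 1)).comap (LinearMap.mulLeft KK (fgen A i)) from h ha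
  exact heightLT_le fun γ hγ a ha => weightSpace_le_heightLT
    (by rw [map_add, height_simpleRoot]; linarith) (gen_mul_mem_weightSpace i ha)

theorem twist_mem_heightLT (i : J) {n : ℤ} {a : Um A} (ha : a ∈ heightLT A n) :
    twist A i a ∈ heightLT A n := by
  suffices h : heightLT A n ≤ (heightLT A n).comap (twist A i).toLinearMap from h ha
  exact heightLT_le fun γ hγ a ha => by
    rw [Submodule.mem_comap, AlgHom.toLinearMap_apply, twist_of_mem_weightSpace i ha]
    exact Submodule.smul_mem _ _ (weightSpace_le_heightLT hγ ha)

theorem coproductStep_mem_map₂_heightLT (i : J) {n : ℤ} {t : Um A ⊗[KK] Um A}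
    (ht : t ∈ Submodule.map₂ (mk KK _ _) (heightLT A n) (heightLT A n)) :
    coproductStep A i t ∈
      Submodule.map₂ (mk KK _ _) (heightLT A (n + 1)) (heightLT A (n + 1)) := by
  suffices h : Submodule.map₂ (mk KK _ _) (heightLT A n) (heightLT A n) ≤
    (Submodule.map₂ (mk KK _ _) (heightLT A (n + 1)) (heightLT A (n + 1))).comap
      (coproductStep A i) from h ht
  exact Submodule.map₂_le.mpr fun a ha b hb => Submodule.add_mem _
    (Submodule.apply_mem_map₂ _ (fgen_mul_mem_heightLT i ha) (heightLT_le_heightLT_add_one n hb))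
    (Submodule.apply_mem_map₂ _ (heightLT_le_heightLT_add_one n (twist_mem_heightLT i ha))
      (fgen_mul_mem_heightLT i hb))

theorem exists_coproduct_cons_prod (i : J) (L : List J) :
    ∃ r ∈ Submodule.map₂ (mk KK _ _) (heightLT A (L.length + 1)) (heightLT A (L.length + 1)),
      coproduct A ((i :: L).map (FreeAlgebra.ι KK)).prod =
        ((i :: L).map (fgen A)).prod ⊗ₜ 1 + 1 ⊗ₜ ((i :: L).map (fgen A)).prod + r := by
  induction L generalizing i with
  | nil =>
    refine ⟨0, Submodule.zero_mem _, ?_⟩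
    rw [List.map_cons, List.prod_cons, coproduct_ι_mul, List.map_nil, List.prod_nil,
      coproduct_one, coproductStep_tmul, map_one, List.map_cons, List.prod_cons, List.map_nil,
      List.prod_nil, mul_one, add_zero]
  | cons j L ih =>
    obtain ⟨r, hr, hcoproduct⟩ := ih j
    set x := ((j :: L).map (fgen A)).prod with hx
    have hx_mem : x ∈ heightLT A (L.length + 1 + 1) :=
      weightSpace_le_heightLT (by rw [height_sum_map_simpleRoot]; simp)
        (Submodule.subset_span ⟨j :: L, rfl, rfl⟩)
    have hi_mem : fgen A i ∈ heightLT A (L.length + 1 + 1) :=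
      weightSpace_le_heightLT (by rw [height_simpleRoot]; grind) (gen_mem_weightSpace i)
    refine ⟨coproductStep A i r + twist A i x ⊗ₜ fgen A i + fgen A i ⊗ₜ x, ?_, ?_⟩
    · rw [List.length_cons, Nat.cast_add, Nat.cast_one]
      exact Submodule.add_mem _ (Submodule.add_mem _ (coproductStep_mem_map₂_heightLT i hr)
        (Submodule.apply_mem_map₂ _ (twist_mem_heightLT i hx_mem) hi_mem))
        (Submodule.apply_mem_map₂ _ hi_mem hx_mem)
    · rw [List.map_cons, List.prod_cons, coproduct_ι_mul, hcoproduct,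
        List.map_cons (f := fgen A) (a := i), List.prod_cons, ← hx, map_add, map_add,
        coproductStep_tmul, coproductStep_tmul, mul_one, map_one]
      abel

theorem exists_coproduct_eq {β : RootLattice J} (hβ : β ≠ 0) {w : FreeAlgebra KK J}
    (hw : w ∈ weightSpace KK (FreeAlgebra.ι KK) β) :
    ∃ r ∈ Submodule.map₂ (mk KK _ _) (heightLT A (height β)) (heightLT A (height β)),
      coproduct A w = Um.mk A w ⊗ₜ 1 + 1 ⊗ₜ Um.mk A w + r := by
  induction hw using Submodule.span_induction with
  | mem w hw =>
    obtain ⟨L, rfl, rfl⟩ := hw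
    obtain _ | ⟨i, L⟩ := L
    · exact absurd rfl hβ
    · have hmk : Um.mk A ((i :: L).map (FreeAlgebra.ι KK)).prod = ((i :: L).map (fgen A)).prod := by
        rw [map_list_prod, List.map_map]; rfl
      rw [height_sum_map_simpleRoot, hmk, List.length_cons, Nat.cast_add, Nat.cast_one]
      exact exists_coproduct_cons_prod i L
  | zero => exact ⟨0, Submodule.zero_mem _, by simp only [map_zero, tmul_zero, zero_tmul, add_zero]⟩
  | add v w _ _ hv hw =>
    obtain ⟨r, hr, hv⟩ := hv
    obtain ⟨s, hs, hw⟩ := hw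
    refine ⟨r + s, Submodule.add_mem _ hr hs, ?_⟩
    rw [map_add, hv, hw, map_add, add_tmul, tmul_add]
    abel
  | smul c w _ hw =>
    obtain ⟨r, hr, hw⟩ := hw
    exact ⟨c • r, Submodule.smul_mem _ c hr, by
      rw [map_smul, hw, map_smul, smul_add, smul_add, smul_tmul', tmul_smul]⟩

end Coproduct

namespace BilProp

open Um TensorProduct
open LinearMap (BilinForm)

variable {A : I → I → ℤ} {E : I → Module.End KK (Um A)} {B : Um A →ₗ[KK] Um A →ₗ[KK] KK}

theorem tmul_coproduct (hE : EprimRel A E) (hB : BilProp A E B) (w : FreeAlgebra KK I) :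
    BilinForm.tmul B B (coproduct A w) = B (mk A w) ∘ₗ LinearMap.mul' KK (Um A) := by
  have adjoint (i : I) (c d : Um A) (t : Um A ⊗[KK] Um A) :
      BilinForm.tmul B B (coproductStep A i t) (c ⊗ₜ d) =
        BilinForm.tmul B B t (E i c ⊗ₜ d + twist A i c ⊗ₜ E i d) := by
    induction t with
    | zero => simp only [map_zero, LinearMap.zero_apply]
    | add t t' ht ht' => simp only [map_add, LinearMap.add_apply] at ht ht' ⊢; rw [ht, ht']; ring
    | tmul a b =>
      simp [coproductStep_tmul, hB.fgen_mul_left, hB.twist_left hE]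
  refine mem_of_one_mem_of_gen_mul_mem (FreeAlgebra.adjoin_range_ι KK I)
    (S := LinearMap.eqLocus (BilinForm.tmul B B ∘ₗ coproduct A)
      (LinearMap.lcomp KK KK (LinearMap.mul' KK (Um A)) ∘ₗ B ∘ₗ (mk A).toLinearMap))
    ?_ (fun i w hw => ?_) w
  · refine TensorProduct.ext' fun c d => ?_
    simp [coproduct_one, hB.1 1, hB.apply_one hE, mul_comm]
  · refine TensorProduct.ext' fun c d => ?_
    have hw' := LinearMap.congr_fun hw
    simp only [LinearMap.comp_apply, AlgHom.toLinearMap_apply, LinearMap.lcomp_apply] at hw'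
    simp [coproduct_ι_mul, adjoint, hw', mk_ι, hB.fgen_mul_left, hE.apply_mul]

theorem antipodeScalar_sq_eq_one (hA : ∀ i j, A i j = A j i) (hE : EprimRel A E)
    (hB : BilProp A E B) {β : RootLattice I} (hβ : β ≠ 0)
    (hdisj : Disjoint (heightLT A (height β)) (LinearMap.ker B)) {x : Um A}
    (hx : x ∈ weightSpace KK (fgen A) β) (hx0 : x ≠ 0) (hBx : B x = 0) :
    antipodeScalar A β ^ 2 = 1 := by
  obtain ⟨w, hw, rfl⟩ : ∃ w ∈ weightSpace KK (FreeAlgebra.ι KK) β, mk A w = x := by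
    have hmap := map_weightSpace (f := FreeAlgebra.ι KK) (mk A) β
    exact Submodule.mem_map.mp (hmap ▸ hx)
  obtain ⟨r, hr, hcoproduct⟩ := exists_coproduct_eq hβ hw
  have hr_ker : r ∈ LinearMap.ker (BilinForm.tmul B B) := by
    refine TensorProduct.ext' fun c d => ?_
    have h := LinearMap.congr_fun (hB.tmul_coproduct hE w) (c ⊗ₜ d)
    simpa [hcoproduct, hBx] using h
  have hr0 : r = 0 := by
    refine Submodule.disjoint_def.mp (disjoint_range_mapIncl_ker_tmul hdisj hdisj) r ?_ hr_ker
    rwa [range_mapIncl]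
  have hadd : antipodeScalar A β • rev A (mk A w) + mk A w = 0 := by
    have h := lift_antipode_coproduct hA w
    rw [hcoproduct, hr0, counit_of_mem_weightSpace hx hβ] at h
    simpa [antipode_one, antipode_of_mem_weightSpace hx] using h
  have hadd_rev : antipodeScalar A β • mk A w + rev A (mk A w) = 0 := by
    simpa [rev_rev] using congrArg (rev A) hadd
  have hsq_smul : antipodeScalar A β ^ 2 • mk A w = (1 : KK) • mk A w := by
    have h := congrArg (antipodeScalar A β • ·) hadd_rev
    simp only [smul_add, smul_smul, smul_zero, ← sq] at h
    rw [one_smul]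
    exact add_right_cancel (h.trans ((add_comm _ _).trans hadd).symm)
  exact smul_left_injective KK hx0 hsq_smul

end BilProp

section SkewCommutator

variable {K C : Type*} [CommRing K] [Ring C] [Algebra K C]

/-- The skew commutator `a ↦ f a - τ(a) f`, the analogue of an adjoint action. -/
def skewCommutator (f : C) (τ : C →ₐ[K] C) : Module.End K C :=
  LinearMap.mulLeft K f - LinearMap.mulRight K f ∘ₗ τ.toLinearMap

variable {f : C} {τ : C →ₐ[K] C} {u : K}

theorem skewCommutator_apply (a : C) : skewCommutator f τ a = f * a - τ a * f := rfl

theorem mul_eq_skewCommutator_add (a : C) : f * a = skewCommutator f τ a + τ a * f :=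
  (sub_add_cancel _ _).symm

theorem skewCommutator_one : skewCommutator f τ 1 = 0 := by
  rw [skewCommutator_apply, map_one, mul_one, one_mul, sub_self]

theorem skewCommutator_mul (a b : C) :
    skewCommutator f τ (a * b) = skewCommutator f τ a * b + τ a * skewCommutator f τ b := by
  simp only [skewCommutator_apply, map_mul, sub_mul, mul_sub, mul_assoc, sub_add_sub_cancel]

theorem map_skewCommutator (hf : τ f = u • f) (a : C) :
    τ (skewCommutator f τ a) = u • skewCommutator f τ (τ a) := by
  simp only [skewCommutator_apply, map_sub, map_mul, hf, smul_mul_assoc, mul_smul_comm, smul_sub]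

theorem map_skewCommutator_pow (hf : τ f = u • f) (m : ℕ) (a : C) :
    τ ((skewCommutator f τ ^ m) a) = u ^ m • (skewCommutator f τ ^ m) (τ a) := by
  have h := Module.End.commute_pow_left_of_commute (f := τ.toLinearMap)
    (g := skewCommutator f τ) (g₂ := u • skewCommutator f τ)
    (LinearMap.ext fun a => (map_skewCommutator hf a).symm) m
  rw [smul_pow] at h
  exact (LinearMap.congr_fun h a).symm

theorem skewCommutator_pow_map_eq_zero (hu : IsUnit u) (hf : τ f = u • f) {m : ℕ} {a : C}
    (ha : (skewCommutator f τ ^ m) a = 0) : (skewCommutator f τ ^ m) (τ a) = 0 := by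
  rw [← (hu.pow m).smul_eq_zero, ← map_skewCommutator_pow hf, ha, map_zero]

theorem skewCommutator_pow_add_mul_eq_zero (hu : IsUnit u) (hf : τ f = u • f) {m n : ℕ} {a b : C}
    (ha : (skewCommutator f τ ^ m) a = 0) (hb : (skewCommutator f τ ^ n) b = 0) :
    (skewCommutator f τ ^ (m + n)) (a * b) = 0 := by
  induction h : m + n generalizing m n a b with
  | zero =>
    obtain rfl : m = 0 := by omega
    rw [pow_zero, Module.End.one_apply] at ha
    rw [ha, zero_mul, map_zero]
  | succ k ih =>
    rw [pow_succ, Module.End.mul_apply, skewCommutator_mul, map_add]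
    have left_vanishes : (skewCommutator f τ ^ k) (skewCommutator f τ a * b) = 0 := by
      obtain _ | m := m
      · rw [pow_zero, Module.End.one_apply] at ha
        rw [ha, map_zero, zero_mul, map_zero]
      · exact ih (by rwa [pow_succ] at ha) hb (by omega)
    have right_vanishes : (skewCommutator f τ ^ k) (τ a * skewCommutator f τ b) = 0 := by
      obtain _ | n := n
      · rw [pow_zero, Module.End.one_apply] at hb
        rw [hb, map_zero, mul_zero, map_zero]
      · exact ih (skewCommutator_pow_map_eq_zero hu hf ha) (by rwa [pow_succ] at hb) (by omega)
    rw [left_vanishes, right_vanishes, add_zero]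

end SkewCommutator

section SkewCommutatorSerre

variable {C : Type*} [Ring C] [Algebra KK C] {f v : C} {τ : C →ₐ[KK] C} {d e : ℤ}

theorem neg_mulRight_comp_pow_apply (hf : τ f = qZ (-(2 * d)) • f) (hv : τ v = qZ (-e) • v)
    (b : ℕ) :
    ((-(LinearMap.mulRight KK f ∘ₗ τ.toLinearMap) : Module.End KK C) ^ b) v =
      ((-1) ^ b * qZ (-(e * b + d * b * (b - 1)))) • (v * f ^ b) := by
  induction b with
  | zero => simp [qZ_zero]
  | succ b ih =>
    have hexp : -(e * ((b + 1 : ℕ) : ℤ) + d * ((b + 1 : ℕ) : ℤ) * (((b + 1 : ℕ) : ℤ) - 1)) =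
        -(e * b + d * b * (b - 1)) + (-e + -(2 * d) * b) := by
      push_cast; ring
    rw [pow_succ', Module.End.mul_apply, ih, hexp, qZ_add _ (_ + _), qZ_add (-e), ← qZ_pow]
    simp only [map_smul, LinearMap.neg_apply, LinearMap.comp_apply, AlgHom.toLinearMap_apply,
      LinearMap.mulRight_apply, map_mul, map_pow, hf, hv, smul_pow, smul_mul_assoc, mul_smul_comm,
      mul_assoc, ← pow_succ, ← neg_smul, smul_smul, mul_neg]
    congr 1
    ring

theorem skewCommutator_pow_eq_serreSum (hd : d ≠ 0) (hf : τ f = qZ (-(2 * d)) • f)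
    (hv : τ v = qZ (-e) • v) {N : ℕ} (hN : d * (N - 1) + e = 0) :
    (skewCommutator f τ ^ N) v = ((-1) ^ N * qFact d N) • serreSum d N f v := by
  have hqcommute : -(LinearMap.mulRight KK f ∘ₗ τ.toLinearMap) * LinearMap.mulLeft KK f =
      qZ (-(2 * d)) • (LinearMap.mulLeft KK f * -(LinearMap.mulRight KK f ∘ₗ τ.toLinearMap)) :=
    LinearMap.ext fun a => by simp [hf, mul_assoc]
  have hcoeff {p : ℕ × ℕ} (hp : p.1 + p.2 = N) :
      qBinomCoeff d p.1 p.2 * ((-1) ^ p.2 * qZ (-(e * p.2 + d * p.2 * (p.2 - 1)))) =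
        (-1) ^ N * ((-1) ^ p.1 * (qFact d p.1)⁻¹ * (qFact d p.2)⁻¹) := by
    have hexp : -(d * p.1 * p.2) + -(e * p.2 + d * p.2 * (p.2 - 1)) = 0 := by
      rw [← hp] at hN
      push_cast at hN
      linear_combination -(p.2 : ℤ) * hN
    have hqZ := qZ_add (-(d * p.1 * p.2)) (-(e * p.2 + d * p.2 * (p.2 - 1)))
    have hsign : (-1 : KK) ^ p.1 * (-1) ^ p.1 = 1 := by rw [← mul_pow]; simp
    rw [hexp, qZ_zero] at hqZ
    rw [qBinomCoeff, ← hp, pow_add]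
    linear_combination -((-1) ^ p.2 * (qFact d p.1)⁻¹ * (qFact d p.2)⁻¹) * (hqZ + hsign)
  rw [skewCommutator, sub_eq_add_neg, add_pow_eq_of_qcommute hd hqcommute, LinearMap.smul_apply,
    mul_comm ((-1) ^ N), mul_smul]
  congr 1
  rw [LinearMap.sum_apply, serreSum, Finset.smul_sum]
  refine Finset.sum_congr rfl fun p hp => ?_
  rw [LinearMap.smul_apply, Module.End.mul_apply, neg_mulRight_comp_pow_apply hf hv, map_smul,
    smul_smul, smul_smul, hcoeff (mem_antidiagonal.mp hp),
    LinearMap.pow_mulLeft, LinearMap.mulLeft_apply, mul_assoc (f ^ p.1)]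

end SkewCommutatorSerre

theorem mem_maxGenEigenspace_zero {R M : Type*} [CommRing R] [AddCommGroup M] [Module R M]
    {T : Module.End R M} {x : M} : x ∈ T.maxGenEigenspace 0 ↔ ∃ m : ℕ, (T ^ m) x = 0 := by
  rw [Module.End.mem_maxGenEigenspace, zero_smul, sub_zero]

theorem geom_sum_qZ_ne_zero {n : ℤ} (hn : n ≠ 0) (k : ℕ) :
    ∑ l ∈ Finset.range (k + 1), qZ n ^ l ≠ 0 := by
  intro h
  have hmul := geom_sum_mul (qZ n) (k + 1)
  rw [h, zero_mul, eq_comm, sub_eq_zero, qZ_pow, qZ_eq_one_iff] at hmul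
  exact mul_ne_zero hn (by positivity) hmul

theorem IsCartan.half_mul_serreN_sub_one_add {J : Type} {A : J → J → ℤ} (hA : IsCartan A)
    {i j : J} (hij : i ≠ j) : A i i / 2 * (serreN A i j - 1) + A i j = 0 := by
  obtain ⟨-, hpos, heven, hnonpos, hdvd⟩ := hA
  obtain ⟨d, hd⟩ := heven i
  obtain ⟨c, hc⟩ := hdvd i j
  have hc_nonpos : c ≤ 0 := nonpos_of_mul_nonpos_right
    (hc ▸ mul_nonpos_of_nonneg_of_nonpos zero_le_two (hnonpos i j hij)) (hpos i)
  have hserreN : (serreN A i j : ℤ) = 1 - c := by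
    rw [serreN, hc, Int.mul_ediv_cancel_left _ (hpos i).ne', Int.toNat_of_nonneg (by omega)]
  rw [hserreN, hd, Int.mul_ediv_cancel_left _ two_ne_zero]
  rw [hd] at hc
  linarith

section RankOne

open Um

variable {J : Type} (A : J → J → ℤ)

/-- The adjoint action of `f_i` on `Um A`. -/
def ad (i : J) : Module.End KK (Um A) := skewCommutator (fgen A i) (twist A i)

variable {A}

theorem ad_pow_fgen_eq_zero (hA : IsCartan A) {i j : J} (hij : i ≠ j) :
    (ad A i ^ serreN A i j) (fgen A j) = 0 := by
  have hdouble : 2 * (A i i / 2) = A i i := Int.mul_ediv_cancel' (hA.2.2.1 i)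
  have hhalf : A i i / 2 ≠ 0 := by have := hA.2.1 i; omega
  rw [ad, skewCommutator_pow_eq_serreSum hhalf (hdouble.symm ▸ twist_fgen A i i)
    (twist_fgen A i j) (hA.half_mul_serreN_sub_one_add hij), serreSum_fgen A hij, smul_zero]

variable (A) in
/-- The kernel of `e_i^*` on the locally nilpotent vectors for the adjoint action of `f_i`. -/
def nilKer (Es : J → Module.End KK (Um A)) (i : J) : Submodule KK (Um A) :=
  LinearMap.ker (Es i) ⊓ (ad A i).maxGenEigenspace 0

theorem mem_nilKer {Es : J → Module.End KK (Um A)} {i : J} {a : Um A} :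
    a ∈ nilKer A Es i ↔ Es i a = 0 ∧ ∃ m : ℕ, (ad A i ^ m) a = 0 := by
  rw [nilKer, Submodule.mem_inf, LinearMap.mem_ker, mem_maxGenEigenspace_zero]

variable {A : I → I → ℤ} {E Es : I → Module.End KK (Um A)}

namespace EstarRel

theorem one_mem_nilKer (hEs : EstarRel A Es) (i : I) : 1 ∈ nilKer A Es i :=
  mem_nilKer.mpr ⟨hEs.1 i, 1, by rw [pow_one]; exact skewCommutator_one⟩

theorem mul_mem_nilKer (hEs : EstarRel A Es) {i : I} {a b : Um A} (ha : a ∈ nilKer A Es i)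
    (hb : b ∈ nilKer A Es i) : a * b ∈ nilKer A Es i := by
  obtain ⟨ha, m, hm⟩ := mem_nilKer.mp ha
  obtain ⟨hb, n, hn⟩ := mem_nilKer.mp hb
  exact mem_nilKer.mpr ⟨by rw [hEs.apply_mul, ha, hb, mul_zero, zero_mul, add_zero], m + n,
    skewCommutator_pow_add_mul_eq_zero (qZ_ne_zero _).isUnit (twist_fgen A i i) hm hn⟩

theorem twist_mem_nilKer (hEs : EstarRel A Es) {i : I} {a : Um A} (ha : a ∈ nilKer A Es i) :
    twist A i a ∈ nilKer A Es i := by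
  obtain ⟨ha, m, hm⟩ := mem_nilKer.mp ha
  exact mem_nilKer.mpr ⟨by rw [hEs.apply_twist, ha, map_zero, smul_zero], m,
    skewCommutator_pow_map_eq_zero (qZ_ne_zero _).isUnit (twist_fgen A i i) hm⟩

theorem ad_mem_nilKer (hEs : EstarRel A Es) {i : I} {a : Um A} (ha : a ∈ nilKer A Es i) :
    ad A i a ∈ nilKer A Es i := by
  obtain ⟨ha, m, hm⟩ := mem_nilKer.mp ha
  refine mem_nilKer.mpr ⟨?_, m, ?_⟩
  · rw [ad, skewCommutator_apply, map_sub, hEs.apply_mul, hEs.apply_mul, hEs.apply_twist,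
      hEs.apply_fgen, ha, map_zero, smul_zero, zero_mul, mul_zero, zero_add, add_zero, if_pos rfl,
      one_mul, mul_one, sub_self]
  · rw [← Module.End.mul_apply, ← pow_succ, pow_succ', Module.End.mul_apply, hm, map_zero]

theorem fgen_mem_nilKer (hA : IsCartan A) (hEs : EstarRel A Es) {i j : I} (hij : i ≠ j) :
    fgen A j ∈ nilKer A Es i :=
  mem_nilKer.mpr ⟨by rw [hEs.apply_fgen, if_neg hij], _, ad_pow_fgen_eq_zero hA hij⟩

theorem iSup_nilKer_mul_pow_eq_top (hA : IsCartan A) (hEs : EstarRel A Es) (i : I) :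
    ⨆ k : ℕ, (nilKer A Es i).map (LinearMap.mulRight KK (fgen A i ^ k)) = ⊤ := by
  set S := ⨆ k : ℕ, (nilKer A Es i).map (LinearMap.mulRight KK (fgen A i ^ k))
  have mul_pow_mem {a : Um A} (ha : a ∈ nilKer A Es i) (k : ℕ) : a * fgen A i ^ k ∈ S :=
    Submodule.mem_iSup_of_mem k ⟨a, ha, rfl⟩
  refine eq_top_iff.mpr fun x _ => mem_of_one_mem_of_gen_mul_mem (adjoin_range_fgen A) ?_ ?_ x
  · simpa using mul_pow_mem (hEs.one_mem_nilKer i) 0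
  · intro j
    suffices h : S ≤ S.comap (LinearMap.mulLeft KK (fgen A j)) from h
    refine iSup_le fun k => ?_
    rintro _ ⟨a, ha, rfl⟩
    change fgen A j * (a * fgen A i ^ k) ∈ S
    rw [← mul_assoc]
    by_cases hij : i = j
    · subst hij
      rw [mul_eq_skewCommutator_add (τ := twist A i) a, add_mul, mul_assoc _ (fgen A i),
        ← pow_succ']
      exact Submodule.add_mem _ (mul_pow_mem (hEs.ad_mem_nilKer ha) k)
        (mul_pow_mem (hEs.twist_mem_nilKer ha) (k + 1))
    · exact mul_pow_mem (hEs.mul_mem_nilKer (hEs.fgen_mem_nilKer hA hij) ha) k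

theorem apply_mul_fgen_pow_succ (hEs : EstarRel A Es) {i : I} {a : Um A} (ha : Es i a = 0)
    (k : ℕ) :
    Es i (a * fgen A i ^ (k + 1)) =
      (∑ l ∈ Finset.range (k + 1), qZ (-A i i) ^ l) • (a * fgen A i ^ k) := by
  induction k with
  | zero => simp [hEs.2, ha]
  | succ k ih =>
    rw [pow_succ, ← mul_assoc, hEs.2, ih, if_pos rfl, geom_sum_succ (n := k + 1), add_smul,
      one_smul, mul_smul, smul_mul_assoc, mul_assoc, ← pow_succ, add_comm]

theorem exists_pow_apply_mul_fgen_pow (hA : ∀ i, 0 < A i i) (hEs : EstarRel A Es) {i : I}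
    {a : Um A} (ha : Es i a = 0) (k : ℕ) :
    ∃ c : KK, c ≠ 0 ∧ (Es i ^ k) (a * fgen A i ^ k) = c • a := by
  induction k with
  | zero => exact ⟨1, one_ne_zero, by simp⟩
  | succ k ih =>
    obtain ⟨c, hc, h⟩ := ih
    refine ⟨_, mul_ne_zero (geom_sum_qZ_ne_zero (neg_ne_zero.mpr (hA i).ne') k) hc, ?_⟩
    rw [pow_succ, Module.End.mul_apply, hEs.apply_mul_fgen_pow_succ ha, map_smul, h, smul_smul]

theorem pow_apply_mul_fgen_pow_eq_zero (hA : ∀ i, 0 < A i i) (hEs : EstarRel A Es) {i : I}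
    {a : Um A} (ha : Es i a = 0) {k n : ℕ} (hkn : k < n) :
    (Es i ^ n) (a * fgen A i ^ k) = 0 := by
  obtain ⟨m, rfl⟩ := Nat.exists_eq_add_of_lt hkn
  obtain ⟨c, -, h⟩ := hEs.exists_pow_apply_mul_fgen_pow hA ha k
  rw [add_comm k m, add_right_comm, pow_add, Module.End.mul_apply, h, map_smul, pow_succ,
    Module.End.mul_apply, ha, map_zero, smul_zero]

theorem mem_nilKer_of_apply_eq_zero (hA : IsCartan A) (hEs : EstarRel A Es) {i : I} {x : Um A}
    (hx : Es i x = 0) : x ∈ nilKer A Es i := by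
  -- `x` is a sum of terms `a_k f_i ^ k` with `a_k` in `nilKer`, on which `e_i^*` acts as a
  -- `q`-derivative in `f_i`. Only the term `k = 0` survives, by induction on the largest `k`.
  let P := partialSups fun k : ℕ => (nilKer A Es i).map (LinearMap.mulRight KK (fgen A i ^ k))
  have P_le_ker (n : ℕ) : P n ≤ LinearMap.ker (Es i ^ (n + 1)) := by
    refine partialSups_le _ _ _ fun k hk => ?_
    rintro _ ⟨a, ha, rfl⟩
    exact hEs.pow_apply_mul_fgen_pow_eq_zero hA.2.1 (mem_nilKer.mp ha).1 (Nat.lt_succ_of_le hk)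
  obtain ⟨n, hn⟩ : ∃ n, x ∈ P n := by
    rw [← Submodule.mem_iSup_of_directed _ P.monotone.directed_le, iSup_partialSups_eq,
      hEs.iSup_nilKer_mul_pow_eq_top hA]
    trivial
  induction n with
  | zero =>
    obtain ⟨a, ha, rfl⟩ := hn
    simpa using ha
  | succ n ih =>
    obtain ⟨y, hy, _, ⟨a, ha, rfl⟩, rfl⟩ := Submodule.mem_sup.mp
      ((partialSups_add_one _ n : P (n + 1) = _).le hn)
    obtain ⟨c, hc, hEs_pow⟩ :=
      hEs.exists_pow_apply_mul_fgen_pow hA.2.1 (mem_nilKer.mp ha).1 (n + 1)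
    have hca : c • a = 0 := by
      have h : (Es i ^ (n + 1)) (y + a * fgen A i ^ (n + 1)) = 0 := by
        rw [pow_succ, Module.End.mul_apply]
        exact (congrArg _ hx).trans (map_zero _)
      rwa [map_add, LinearMap.mem_ker.mp (P_le_ker n hy), zero_add, hEs_pow] at h
    obtain rfl : a = 0 := (smul_eq_zero.mp hca).resolve_left hc
    rw [map_zero, add_zero] at ih ⊢
    exact ih hy

end EstarRel

namespace EprimRel

theorem apply_ad (hE : EprimRel A E) (i : I) (a : Um A) :
    E i (ad A i a) + twist A i (twist A i a) = a + qZ (-A i i) • ad A i (E i a) := by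
  have h := congrArg (E i) (mul_eq_skewCommutator_add (f := fgen A i) (τ := twist A i) a)
  rw [hE.2, if_pos rfl, mul_eq_skewCommutator_add (τ := twist A i) (E i a), map_add, hE.apply_mul,
    hE.apply_twist, hE.apply_fgen, if_pos rfl, mul_one, smul_mul_assoc, smul_add] at h
  refine add_right_cancel (b := qZ (-A i i) • (twist A i (E i a) * fgen A i)) ?_
  rw [add_assoc, add_assoc, add_comm (twist A i (twist A i a))]
  exact h.symm

theorem apply_ad_pow_succ (hE : EprimRel A E) {i : I} {β : RootLattice I} {x : Um A}
    (hx : x ∈ weightSpace KK (fgen A) β) (hEx : E i x = 0) (m : ℕ) :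
    E i ((ad A i ^ (m + 1)) x) =
      ((∑ l ∈ Finset.range (m + 1), qZ (-A i i) ^ l) *
        (1 - qZ (-rootForm A (simpleRoot i) β) ^ 2 * qZ (-A i i) ^ m)) • (ad A i ^ m) x := by
  have htwist (m : ℕ) : twist A i (twist A i ((ad A i ^ m) x)) =
      (qZ (-rootForm A (simpleRoot i) β) ^ 2 * qZ (-A i i) ^ (2 * m)) • (ad A i ^ m) x := by
    simp only [ad, map_skewCommutator_pow (twist_fgen A i i), twist_of_mem_weightSpace i hx,
      map_smul, smul_smul]
    congr 1
    ring
  have happly (m : ℕ) : E i ((ad A i ^ (m + 1)) x) +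
      (qZ (-rootForm A (simpleRoot i) β) ^ 2 * qZ (-A i i) ^ (2 * m)) • (ad A i ^ m) x =
      (ad A i ^ m) x + qZ (-A i i) • ad A i (E i ((ad A i ^ m) x)) := by
    rw [← htwist, pow_succ', Module.End.mul_apply, hE.apply_ad]
  refine add_right_cancel ((happly m).trans ?_)
  rw [← add_smul]
  induction m with
  | zero => simp [hEx]
  | succ m ih =>
    have hih := add_right_cancel (((happly m).trans ih).trans (add_smul _ _ _))
    rw [hih, map_smul, ← Module.End.mul_apply, ← pow_succ', smul_smul]
    nth_rewrite 1 [← one_smul KK ((ad A i ^ (m + 1)) x)]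
    rw [← add_smul]
    congr 1
    linear_combination (qZ (-rootForm A (simpleRoot i) β) ^ 2 * qZ (-A i i) ^ (m + 1)) *
      geom_sum_succ' (x := qZ (-A i i)) (n := m + 1) - geom_sum_succ (x := qZ (-A i i)) (n := m + 1)

theorem rootForm_simpleRoot_nonpos (hA : IsCartan A) (hE : EprimRel A E) (hEs : EstarRel A Es)
    {i : I} {β : RootLattice I} {x : Um A} (hx : x ∈ weightSpace KK (fgen A) β) (hx0 : x ≠ 0)
    (hEx : E i x = 0) (hEsx : Es i x = 0) : rootForm A (simpleRoot i) β ≤ 0 := by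
  by_contra! hpos
  obtain ⟨-, n, hn⟩ := mem_nilKer.mp (hEs.mem_nilKer_of_apply_eq_zero hA hEsx)
  suffices ad_pow_ne_zero : ∀ m, (ad A i ^ m) x ≠ 0 from ad_pow_ne_zero n hn
  intro m
  induction m with
  | zero => rwa [pow_zero, Module.End.one_apply]
  | succ m ih =>
    intro h
    have hEx_succ := hE.apply_ad_pow_succ hx hEx m
    rw [h, map_zero, eq_comm] at hEx_succ
    have hfactor := (smul_eq_zero.mp hEx_succ).resolve_right ih
    have hqZ := (mul_eq_zero.mp hfactor).resolve_left
      (geom_sum_qZ_ne_zero (neg_ne_zero.mpr (hA.2.1 i).ne') m)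
    rw [sub_eq_zero, eq_comm, qZ_pow, qZ_pow, ← qZ_add, qZ_eq_one_iff] at hqZ
    have := mul_nonneg (hA.2.1 i).le (Nat.cast_nonneg (α := ℤ) m)
    push_cast at hqZ
    linarith

end EprimRel

end RankOne

namespace BilProp

open Um

theorem disjoint_weightSpace_zero_ker {J : Type} {A : J → J → ℤ} {E : J → Module.End KK (Um A)}
    {B : Um A →ₗ[KK] Um A →ₗ[KK] KK} (hB : BilProp A E B) :
    Disjoint (weightSpace KK (fgen A) 0) (LinearMap.ker B) := by
  refine Submodule.disjoint_def.mpr fun x hx hBx => ?_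
  rw [weightSpace_zero] at hx
  obtain ⟨c, rfl⟩ := Submodule.mem_span_singleton.mp hx
  have hc : c = 0 := by simpa [hB.2.1] using LinearMap.congr_fun (LinearMap.mem_ker.mp hBx) 1
  rw [hc, zero_smul]

variable {A : I → I → ℤ} {E Es : I → Module.End KK (Um A)}
  {B : Um A →ₗ[KK] Um A →ₗ[KK] KK}

theorem disjoint_weightSpace_ker (hA : IsCartan A) (hE : EprimRel A E) (hEs : EstarRel A Es)
    (hB : BilProp A E B) {β : RootLattice I}
    (hdisj : Disjoint (heightLT A (height β)) (LinearMap.ker B)) :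
    Disjoint (weightSpace KK (fgen A) β) (LinearMap.ker B) := by
  by_cases hβ : 0 ≤ β
  swap
  · rw [weightSpace_eq_bot hβ]
    exact disjoint_bot_left
  obtain rfl | hβ0 := eq_or_ne β 0
  · exact hB.disjoint_weightSpace_zero_ker
  refine Submodule.disjoint_def.mpr fun x hx hBx => by_contra fun hx0 => ?_
  have lower_le (i : I) : weightSpace KK (fgen A) (β - simpleRoot i) ≤ heightLT A (height β) :=
    weightSpace_le_heightLT (by rw [map_sub, height_simpleRoot]; exact sub_one_lt _)
  have hEx (i : I) : E i x = 0 := Submodule.disjoint_def.mp hdisj _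
    (lower_le i (hE.apply_mem_weightSpace i hx)) (hB.eprim_mem_ker i hBx)
  have hEsx (i : I) : Es i x = 0 := Submodule.disjoint_def.mp hdisj _
    (lower_le i (hEs.apply_mem_weightSpace i hx)) (hB.estar_mem_ker hA.1 hE hEs i hBx)
  have norm_nonpos : rootForm A β β ≤ 0 := rootForm_self_nonpos hβ fun i =>
    hE.rootForm_simpleRoot_nonpos hA hEs hx hx0 (hEx i) (hEsx i)
  have twoRho_le : twoRho A β ≤ rootForm A β β :=
    twoRho_le_of_antipodeScalar_sq_eq_one (hB.antipodeScalar_sq_eq_one hA.1 hE hβ0 hdisj hx hx0 hBx)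
  exact ((twoRho_pos hA.2.1 hβ hβ0).trans_le (twoRho_le.trans norm_nonpos)).false

theorem disjoint_heightLT_ker (hA : IsCartan A) (hE : EprimRel A E) (hEs : EstarRel A Es)
    (hB : BilProp A E B) (n : ℕ) : Disjoint (heightLT A n) (LinearMap.ker B) := by
  induction n with
  | zero =>
    refine hB.disjoint_iSup_weightSpace_ker hE fun γ hγ => ?_
    rw [weightSpace_eq_bot fun hγ0 => hγ.not_ge (height_nonneg hγ0)]
    exact disjoint_bot_left
  | succ n ih =>
    refine hB.disjoint_iSup_weightSpace_ker hE fun γ hγ => ?_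
    have hle : height γ ≤ n := Int.lt_add_one_iff.mp (by exact_mod_cast hγ)
    refine hB.disjoint_weightSpace_ker hA hE hEs (ih.mono_left ?_)
    exact heightLT_le fun δ hδ => weightSpace_le_heightLT (hδ.trans_le hle)

theorem ker_eq_bot (hA : IsCartan A) (hE : EprimRel A E) (hEs : EstarRel A Es)
    (hB : BilProp A E B) : LinearMap.ker B = ⊥ := by
  have hdisj := hB.disjoint_iSup_weightSpace_ker hE (s := Set.univ) fun γ _ =>
    hB.disjoint_weightSpace_ker hA hE hEs <|
      (hB.disjoint_heightLT_ker hA hE hEs (height γ).toNat).mono_left <|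
        heightLT_le fun _ hδ => weightSpace_le_heightLT (hδ.trans_le (Int.self_le_toNat _))
  simp only [iSup_subtype, Set.mem_univ, iSup_pos] at hdisj
  rwa [iSup_weightSpace_eq_top (adjoin_range_fgen A), top_disjoint] at hdisj

end BilProp

theorem stmt2 (A : I → I → ℤ) (hA : IsCartan A)
    (E : I → Module.End KK (Um A)) (hE : EprimRel A E)
    (Es : I → Module.End KK (Um A)) (hEs : EstarRel A Es) :
    (∃! B : Um A →ₗ[KK] Um A →ₗ[KK] KK, BilProp A E B) ∧
    (∀ B : Um A →ₗ[KK] Um A →ₗ[KK] KK, BilProp A E B →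
      (∀ a : Um A, (∀ b : Um A, B a b = 0) → a = 0) ∧
      (∀ (i : I) (a b : Um A), B (Es i a) b = B a (b * fgen A i))) := by
  refine ⟨?_, fun B hB => ⟨fun a ha => ?_, hB.estar_left hA.1 hE hEs⟩⟩
  · obtain ⟨B, hB⟩ := exists_bilProp hA.1 hE
    exact ⟨B, hB, fun B' hB' => hB'.unique hE hB⟩
  · exact LinearMap.ker_eq_bot'.mp (hB.ker_eq_bot hA hE hEs) a (LinearMap.ext ha)
end
end

section
/- Let V be a K-vector space, L_0 an A_0-submodule of V, L_∞ an A_∞-submodule of V, and V_A an A-submodule of V, each of which generates V as a K-vector space. Set E = L_0 ∩ L_∞ ∩ V_A. Then the following conditions are equivalent: (1) the natural map E → L_0/qL_0 is an isomorphism; (2) the natural map E → L_∞/q^{−1}L_∞ is an isomorphism; (3) the natural map (L_0 ∩ V_A) ⊕ (q^{−1}L_∞ ∩ V_A) → V_A is an isomorphism; (4) the natural maps A_0⊗_ℚ E → L_0, A_∞⊗_ℚ E → L_∞, A⊗_ℚ E → V_A and K⊗_ℚ E → V are all isomorphisms. -/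
noncomputable section
open scoped BigOperators TensorProduct

/-- the subring `A₀ = {f/g : f,g ∈ ℚ[q], g(0) ≠ 0}` of `K = ℚ(q)`, as a subset. -/
def A0set : Set KK :=
  {x | ∃ f g : Polynomial ℚ, Polynomial.eval 0 g ≠ 0 ∧
    x = algebraMap (Polynomial ℚ) KK f / algebraMap (Polynomial ℚ) KK g}

/-- the subring `A_∞ = {f/g : f,g ∈ ℚ[q⁻¹], g(0) ≠ 0}` of `K = ℚ(q)`, as a subset. -/
def AinfSet : Set KK :=
  {x | ∃ f g : Polynomial ℚ, Polynomial.eval 0 g ≠ 0 ∧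
    x = Polynomial.aeval qq⁻¹ f / Polynomial.aeval qq⁻¹ g}

/-- the subring `A = ℚ[q, q⁻¹]` of `K = ℚ(q)`, as a subset. -/
def Aset : Set KK :=
  {x | ∃ (f : Polynomial ℚ) (n : ℕ), x = algebraMap (Polynomial ℚ) KK f * qq ^ (-(n : ℤ))}

variable {V : Type} [AddCommGroup V] [Module KK V] [Module ℚ V]
  [IsScalarTower ℚ KK V] [SMulCommClass ℚ KK V]

/-- a `ℚ`-submodule stable under multiplication by a set `S ⊆ K` of scalars
(this is how we encode "`A₀`-submodule", etc.). -/
def IsSubmoduleOver (S : Set KK) (L : Submodule ℚ V) : Prop :=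
  ∀ c ∈ S, ∀ x ∈ L, c • x ∈ L

/-- `c L = {c x : x ∈ L}` for a scalar `c : K`. -/
def scalMul (c : KK) (L : Submodule ℚ V) : Submodule ℚ V :=
  Submodule.span ℚ {x | ∃ y ∈ L, x = c • y}

/-- the natural map `E → L/N` for `E ≤ L`. -/
def balMap (L : Submodule ℚ V) (E : Submodule ℚ V) (hE : E ≤ L) (N : Submodule ℚ L) :
    E → L ⧸ N :=
  fun x => Submodule.Quotient.mk (⟨x.1, hE x.2⟩ : L)

/-- the natural map `W ⊗_ℚ E → V`, `c ⊗ x ↦ c • x`, for `W` a `ℚ`-submodule of `K`. -/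
def smulPair (W : Submodule ℚ KK) (E : Submodule ℚ V) : W ⊗[ℚ] E →ₗ[ℚ] V :=
  TensorProduct.lift
    { toFun := fun c =>
        { toFun := fun x => (c : KK) • (x : V)
          map_add' := by intro x y; simp [smul_add]
          map_smul' := by
            intro r x
            show (c : KK) • ((r • x : E) : V) = r • ((c : KK) • (x : V))
            rw [Submodule.coe_smul]
            exact smul_comm _ _ _ }
      map_add' := by intro c c'; ext x; simp [add_smul]
      map_smul' := by intro r c; ext x; simp [smul_assoc] }

/-- the natural map `K ⊗_ℚ E → V`. -/
def smulAll (E : Submodule ℚ V) : KK ⊗[ℚ] E →ₗ[ℚ] V :=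
  TensorProduct.lift
    { toFun := fun c =>
        { toFun := fun x => c • (x : V)
          map_add' := by intro x y; simp [smul_add]
          map_smul' := by
            intro r x
            show c • ((r • x : E) : V) = r • (c • (x : V))
            rw [Submodule.coe_smul]
            exact smul_comm _ _ _ }
      map_add' := by intro c c'; ext x; simp [add_smul]
      map_smul' := by intro r c; ext x; simp [smul_assoc] }

/-
Write `p` for `q` or `q⁻¹`, and `L`, `L'` for the lattices attached to `p` and `p⁻¹`, so that (1)
and (2) both take the form `L = E ⊕ p L`; let `k` be the field of constants.

(1) ⇔ (3) ⇔ (2): as `V_A` spans `V`, every `x ∈ L` has a multiple `g(p) x` in `V_A` with `g(0) ≠ 0`,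
so `L = (L ∩ V_A) + p L`. With the modular law this turns a decomposition
`V_A = (p L ∩ V_A) ⊕ (L' ∩ V_A)` into `L = E ⊕ p L`. Conversely, `L = E ⊕ p L` gives
`L ∩ V_A = E + (p L ∩ V_A)`, and one exhausts `V_A` by the subspaces `p⁻ⁿ L ∩ V_A`. Scaling by
`p⁻¹` turns this decomposition into the one with `L` and `p⁻¹ L'`.

(1) ⇒ (4): a linear relation over `K` among `k`-independent elements of `E` can be scaled to have
coefficients in the local ring at `p = 0`; then `E ∩ p L = 0` makes all coefficients divisible by
`p` again and again, hence zero. Surjectivity follows by a similar descent along powers of `p`.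

(4) ⇒ (1): a `k`-linear functional on the local ring which kills the multiples of `p` but not `1`
shows that `E` meets `p L` trivially.
-/

section LocalRing

open Polynomial IntermediateField

variable {k K : Type*} [Field k] [Field K] [Algebra k K]

variable (k) in
/-- The subring `{f(p) / g(p) : g(0) ≠ 0}` of a field `K`, which is `A₀` for `p = q` and `A_∞` for
`p = q⁻¹`. The condition `g(p) ≠ 0` is automatic for transcendental `p`, and makes this set a
subalgebra for every `p`. -/
def localAtZero (p : K) : Subalgebra k K where
  carrier := {x | ∃ f g : k[X], g.eval 0 ≠ 0 ∧ aeval p g ≠ 0 ∧ x = aeval p f / aeval p g}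
  mul_mem' := by
    rintro _ _ ⟨f, g, hg, hgp, rfl⟩ ⟨f', g', hg', hgp', rfl⟩
    exact ⟨f * f', g * g', by simp [hg, hg'], by simp [hgp, hgp'],
      by rw [map_mul, map_mul, div_mul_div_comm]⟩
  add_mem' := by
    rintro _ _ ⟨f, g, hg, hgp, rfl⟩ ⟨f', g', hg', hgp', rfl⟩
    exact ⟨f * g' + g * f', g * g', by simp [hg, hg'], by simp [hgp, hgp'],
      by simp only [map_mul, map_add, div_add_div _ _ hgp hgp']⟩
  algebraMap_mem' r := ⟨C r, 1, by simp, by simp, by simp⟩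

variable (k) in
/-- The subring `k[p, p⁻¹]` of Laurent polynomials in `p`, which is `A` for `p = q`. -/
def laurentSubalgebra (p : K) : Subalgebra k K := Algebra.adjoin k {p, p⁻¹}

variable {p : K}

lemma aeval_mem_localAtZero (p : K) (f : k[X]) : aeval p f ∈ localAtZero k p :=
  ⟨f, 1, by simp, by simp, by simp⟩

lemma self_mem_localAtZero (p : K) : p ∈ localAtZero k p := by
  simpa using aeval_mem_localAtZero p (X : k[X])

lemma self_mem_laurentSubalgebra (p : K) : p ∈ laurentSubalgebra k p :=
  Algebra.subset_adjoin (Set.mem_insert _ _)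

lemma inv_mem_laurentSubalgebra (p : K) : p⁻¹ ∈ laurentSubalgebra k p :=
  Algebra.subset_adjoin (Set.mem_insert_of_mem _ rfl)

lemma laurentSubalgebra_inv (p : K) : laurentSubalgebra k p⁻¹ = laurentSubalgebra k p := by
  rw [laurentSubalgebra, laurentSubalgebra, inv_inv, Set.pair_comm]

lemma aeval_mem_laurentSubalgebra (p : K) (f : k[X]) : aeval p f ∈ laurentSubalgebra k p :=
  Algebra.adjoin_mono (Set.singleton_subset_iff.2 (Set.mem_insert _ _))
    (aeval_mem_adjoin_singleton k p)

lemma mem_laurentSubalgebra_iff (hp : p ≠ 0) {x : K} :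
    x ∈ laurentSubalgebra k p ↔ ∃ (f : k[X]) (n : ℕ), x = aeval p f * p ^ (-(n : ℤ)) := by
  refine ⟨fun hx ↦ ?_, ?_⟩
  · induction hx using Algebra.adjoin_induction with
    | mem x hx =>
      obtain rfl | rfl := hx
      · exact ⟨X, 0, by simp⟩
      · exact ⟨1, 1, by simp⟩
    | algebraMap r => exact ⟨C r, 0, by simp⟩
    | add x y _ _ hx hy =>
      obtain ⟨f, m, rfl⟩ := hx
      obtain ⟨g, n, rfl⟩ := hy
      refine ⟨f * X ^ n + g * X ^ m, m + n, ?_⟩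
      simp only [map_add, map_mul, map_pow, aeval_X, zpow_neg, zpow_natCast, pow_add]
      field_simp
    | mul x y _ _ hx hy =>
      obtain ⟨f, m, rfl⟩ := hx
      obtain ⟨g, n, rfl⟩ := hy
      refine ⟨f * g, m + n, ?_⟩
      simp only [map_mul, zpow_neg, zpow_natCast, pow_add]
      field_simp
  · rintro ⟨f, n, rfl⟩
    rw [zpow_neg, zpow_natCast, ← inv_pow]
    exact mul_mem (aeval_mem_laurentSubalgebra p f) (pow_mem (inv_mem_laurentSubalgebra p) n)

lemma exists_eq_algebraMap_add_mul_of_mem_localAtZero {c : K} (hc : c ∈ localAtZero k p) :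
    ∃ r : k, ∃ d ∈ localAtZero k p, c = algebraMap k K r + p * d := by
  obtain ⟨f, g, hg, hgp, rfl⟩ := hc
  obtain ⟨j, hj⟩ : X ∣ f - C (f.eval 0 / g.eval 0) * g := by
    rw [X_dvd_iff, coeff_zero_eq_eval_zero]
    simp [hg]
  have hf : f = C (f.eval 0 / g.eval 0) * g + X * j := by rw [← hj, add_sub_cancel]
  refine ⟨f.eval 0 / g.eval 0, aeval p j / aeval p g, ⟨j, g, hg, hgp, rfl⟩, ?_⟩
  have hfp := congrArg (aeval p) hf
  simp only [map_add, map_mul, aeval_C, aeval_X] at hfp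
  rw [div_eq_iff hgp, add_mul, mul_assoc, div_mul_cancel₀ _ hgp, hfp]

lemma ne_zero_of_transcendental (hp : Transcendental k p) : p ≠ 0 := by
  rintro rfl
  exact hp isAlgebraic_zero

lemma mem_localAtZero_iff (hp : Transcendental k p) {x : K} :
    x ∈ localAtZero k p ↔ ∃ f g : k[X], g.eval 0 ≠ 0 ∧ x = aeval p f / aeval p g := by
  refine ⟨fun ⟨f, g, hg, _, hx⟩ ↦ ⟨f, g, hg, hx⟩, fun ⟨f, g, hg, hx⟩ ↦ ⟨f, g, hg, ?_, hx⟩⟩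
  refine fun hgp ↦ hg ?_
  rw [transcendental_iff.1 hp g hgp, eval_zero]

lemma inv_notMem_localAtZero (hp : Transcendental k p) : p⁻¹ ∉ localAtZero k p := by
  rintro ⟨f, g, hg, hgp, h⟩
  have hfg : aeval p g = aeval p (X * f) := by
    rw [eq_div_iff hgp, inv_mul_eq_iff_eq_mul₀ (ne_zero_of_transcendental hp)] at h
    simpa using h
  apply hg
  simp [(transcendental_iff_injective.1 hp) hfg]

lemma exists_pow_mul_eq_aeval_div (hp : Transcendental k p) (hK : k⟮p⟯ = ⊤) (c : K) :
    ∃ (n : ℕ) (f g : k[X]), g.eval 0 ≠ 0 ∧ aeval p g ≠ 0 ∧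
      p ^ n * c = aeval p f / aeval p g := by
  obtain ⟨f, g, rfl⟩ := (mem_adjoin_simple_iff k c).1 (hK ▸ mem_top : c ∈ k⟮p⟯)
  by_cases hg : g = 0
  · exact ⟨0, 0, 1, by simp, by simp, by simp [hg]⟩
  obtain ⟨h, hgh, hh⟩ := exists_eq_pow_rootMultiplicity_mul_and_not_dvd g hg 0
  rw [C_0, sub_zero] at hgh hh
  have hhp : aeval p h ≠ 0 := fun h0 ↦
    hh ((transcendental_iff.1 hp h h0).symm ▸ dvd_zero X)
  refine ⟨g.rootMultiplicity 0, f, h, ?_, hhp, ?_⟩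
  · rwa [← coeff_zero_eq_eval_zero, ne_eq, ← X_dvd_iff]
  · have hgp : aeval p g = p ^ g.rootMultiplicity 0 * aeval p h := by
      simpa using congrArg (aeval p) hgh
    have hpn := pow_ne_zero (g.rootMultiplicity 0) (ne_zero_of_transcendental hp)
    rw [hgp, ← mul_div_assoc, mul_div_mul_left _ _ hpn]

lemma exists_pow_mul_mem_localAtZero (hp : Transcendental k p) (hK : k⟮p⟯ = ⊤) (c : K) :
    ∃ n : ℕ, p ^ n * c ∈ localAtZero k p := by
  obtain ⟨n, f, g, hg, hgp, h⟩ := exists_pow_mul_eq_aeval_div hp hK c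
  exact ⟨n, f, g, hg, hgp, h⟩

lemma exists_aeval_mul_mem_laurentSubalgebra (hp : Transcendental k p) (hK : k⟮p⟯ = ⊤) (c : K) :
    ∃ g : k[X], g.eval 0 ≠ 0 ∧ aeval p g * c ∈ laurentSubalgebra k p := by
  obtain ⟨n, f, g, hg, hgp, h⟩ := exists_pow_mul_eq_aeval_div hp hK c
  refine ⟨g, hg, ?_⟩
  have hgc : aeval p g * c = p⁻¹ ^ n * aeval p f := by
    rw [eq_div_iff hgp] at h
    rw [inv_pow, eq_inv_mul_iff_mul_eq₀ (pow_ne_zero n (ne_zero_of_transcendental hp)), ← h]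
    ring
  rw [hgc]
  exact mul_mem (pow_mem (inv_mem_laurentSubalgebra p) n) (aeval_mem_laurentSubalgebra p f)

lemma eq_zero_of_forall_inv_pow_mul_mem_localAtZero (hp : Transcendental k p) (hK : k⟮p⟯ = ⊤)
    {c : K} (hc : ∀ n : ℕ, p⁻¹ ^ n * c ∈ localAtZero k p) : c = 0 := by
  by_contra hc0
  obtain ⟨n, hn⟩ := exists_pow_mul_mem_localAtZero hp hK c⁻¹
  have hprod : p⁻¹ ^ (n + 1) * c * (p ^ n * c⁻¹) = p⁻¹ := by
    have := ne_zero_of_transcendental hp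
    rw [inv_pow, pow_succ]
    field_simp
  exact inv_notMem_localAtZero hp (hprod ▸ mul_mem (hc (n + 1)) hn)

lemma transcendental_inv (hp : Transcendental k p) : Transcendental k p⁻¹ :=
  fun h ↦ hp (IsAlgebraic.inv_iff.1 h)

lemma adjoin_simple_inv_eq_top (hK : k⟮p⟯ = ⊤) : k⟮p⁻¹⟯ = ⊤ := by
  rw [eq_top_iff, ← hK, adjoin_simple_le_iff]
  simpa using inv_mem (mem_adjoin_simple_self k p⁻¹)

end LocalRing

section Lattices

open Polynomial IntermediateField Pointwise

variable {k K M : Type*} [Field k] [Field K] [Algebra k K] [AddCommGroup M] [Module k M]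
  [Module K M] {p : K} {S T E L L' W : Submodule k M}

/-- A `k`-subspace closed under multiplication by a set of scalars: the encoding of "`A₀`-submodule
of `V`" and its analogues, so that submodules over different rings can be intersected. -/
def IsStableUnder (R : Set K) (L : Submodule k M) : Prop :=
  ∀ c ∈ R, ∀ x ∈ L, c • x ∈ L

/-- The subspace `W` is the internal direct sum of `S` and `T`. -/
def IsInternalSum (S T W : Submodule k M) : Prop :=
  S ⊔ T = W ∧ S ⊓ T = ⊥

lemma exists_pow_smul_mem (hp : Transcendental k p) (hK : k⟮p⟯ = ⊤)
    (hL : IsStableUnder (localAtZero k p : Set K) L) (hLspan : Submodule.span K (L : Set M) = ⊤)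
    (x : M) : ∃ n : ℕ, p ^ n • x ∈ L := by
  have hpow (n : ℕ) : p ^ n ∈ localAtZero k p := pow_mem (self_mem_localAtZero p) n
  induction hLspan ▸ Submodule.mem_top (x := x) using Submodule.span_induction with
  | mem x hx => exact ⟨0, by simpa using hx⟩
  | zero => exact ⟨0, by simp⟩
  | add x y _ _ hx hy =>
    obtain ⟨m, hm⟩ := hx
    obtain ⟨n, hn⟩ := hy
    refine ⟨m + n, ?_⟩
    rw [smul_add]
    refine L.add_mem ?_ ?_
    · rw [pow_add, mul_comm, mul_smul]
      exact hL _ (hpow n) _ hm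
    · rw [pow_add, mul_smul]
      exact hL _ (hpow m) _ hn
  | smul c x _ hx =>
    obtain ⟨m, hm⟩ := exists_pow_mul_mem_localAtZero hp hK c
    obtain ⟨n, hn⟩ := hx
    refine ⟨m + n, ?_⟩
    rw [smul_smul, show p ^ (m + n) * c = p ^ m * c * p ^ n by ring, mul_smul]
    exact hL _ hm _ hn

lemma exists_aeval_smul_mem (hp : Transcendental k p) (hK : k⟮p⟯ = ⊤)
    (hW : IsStableUnder (laurentSubalgebra k p : Set K) W)
    (hWspan : Submodule.span K (W : Set M) = ⊤) (x : M) :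
    ∃ g : k[X], g.eval 0 ≠ 0 ∧ aeval p g • x ∈ W := by
  have hpoly (g : k[X]) := aeval_mem_laurentSubalgebra p g
  induction hWspan ▸ Submodule.mem_top (x := x) using Submodule.span_induction with
  | mem x hx => exact ⟨1, by simp, by simpa using hx⟩
  | zero => exact ⟨1, by simp, by simp⟩
  | add x y _ _ hx hy =>
    obtain ⟨f, hf, hfx⟩ := hx
    obtain ⟨g, hg, hgy⟩ := hy
    refine ⟨f * g, by simp [hf, hg], ?_⟩
    rw [smul_add]
    refine W.add_mem ?_ ?_
    · rw [mul_comm, map_mul, mul_smul]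
      exact hW _ (hpoly g) _ hfx
    · rw [map_mul, mul_smul]
      exact hW _ (hpoly f) _ hgy
  | smul c x _ hx =>
    obtain ⟨f, hf, hfc⟩ := exists_aeval_mul_mem_laurentSubalgebra hp hK c
    obtain ⟨g, hg, hgx⟩ := hx
    refine ⟨f * g, by simp [hf, hg], ?_⟩
    rw [map_mul, smul_smul, mul_right_comm, mul_smul]
    exact hW _ hfc _ hgx

variable [IsScalarTower k K M]

lemma smul_inf₀ (hp : p ≠ 0) (S T : Submodule k M) : p • (S ⊓ T) = p • S ⊓ p • T :=
  SetLike.coe_injective (Set.smul_set_inter₀ hp)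

lemma mem_smul_iff_inv_smul_mem₀ (hp : p ≠ 0) {x : M} : x ∈ p • S ↔ p⁻¹ • x ∈ S :=
  Set.mem_smul_set_iff_inv_smul_mem₀ hp (S : Set M) x

lemma IsInternalSum.symm (h : IsInternalSum S T W) : IsInternalSum T S W :=
  ⟨sup_comm S T ▸ h.1, inf_comm S T ▸ h.2⟩

lemma IsInternalSum.smul (hp : p ≠ 0) (h : IsInternalSum S T W) :
    IsInternalSum (p • S) (p • T) (p • W) :=
  ⟨by rw [← Submodule.smul_sup', h.1], by rw [← smul_inf₀ hp, h.2, Submodule.smul_bot']⟩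

lemma IsStableUnder.smul_le {R : Set K} (hL : IsStableUnder R L) (hp : p ∈ R) : p • L ≤ L := by
  rintro _ ⟨x, hx, rfl⟩
  exact hL p hp x hx

lemma IsStableUnder.smul_laurent_eq (hW : IsStableUnder (laurentSubalgebra k p : Set K) W)
    (hp : p ≠ 0) : p • W = W ∧ p⁻¹ • W = W := by
  have hpW := hW.smul_le (self_mem_laurentSubalgebra p)
  have hpW' := hW.smul_le (inv_mem_laurentSubalgebra p)
  refine ⟨hpW.antisymm ?_, hpW'.antisymm ?_⟩
  · simpa only [smul_inv_smul₀ hp] using smul_mono_right p hpW'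
  · simpa only [inv_smul_smul₀ hp] using smul_mono_right p⁻¹ hpW

lemma le_inf_sup_smul (hp : Transcendental k p) (hK : k⟮p⟯ = ⊤)
    (hL : IsStableUnder (localAtZero k p : Set K) L)
    (hW : IsStableUnder (laurentSubalgebra k p : Set K) W)
    (hWspan : Submodule.span K (W : Set M) = ⊤) : L ≤ L ⊓ W ⊔ p • L := by
  intro x hx
  obtain ⟨g, hg, hgx⟩ := exists_aeval_smul_mem hp hK hW hWspan x
  have hpoly (f : k[X]) : aeval p f • x ∈ L := hL _ (aeval_mem_localAtZero p f) x hx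
  have hsplit : aeval p g • x = p • aeval p g.divX • x + g.eval 0 • x := by
    have h := congrArg (aeval p) (X_mul_divX_add g)
    rw [map_add, map_mul, aeval_X, aeval_C, coeff_zero_eq_eval_zero] at h
    rw [← h, add_smul, mul_smul, algebraMap_smul]
  have hmem : g.eval 0 • x ∈ L ⊓ W ⊔ p • L := by
    rw [← sub_eq_iff_eq_add'.2 hsplit]
    exact sub_mem (Submodule.mem_sup_left ⟨hpoly g, hgx⟩)
      (Submodule.mem_sup_right (Submodule.smul_mem_pointwise_smul _ _ _ (hpoly _)))
  exact (Submodule.smul_mem_iff _ hg).1 hmem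

lemma inf_eq_inf_sup_smul_inf (h : L ⊓ L' ⊓ W ⊔ p • L = L) :
    L ⊓ W = L ⊓ L' ⊓ W ⊔ p • L ⊓ W := by
  rw [← sup_inf_assoc_of_le _ (inf_le_right : L ⊓ L' ⊓ W ≤ W), h]

lemma le_smul_inf_sup_inf (hp : p ≠ 0) (hpL' : p⁻¹ • L' ≤ L') (hpW : p⁻¹ • W = W)
    (hexh : ∀ x ∈ W, ∃ n : ℕ, p ^ n • x ∈ L) (h : L ⊓ L' ⊓ W ⊔ p • L = L) :
    W ≤ p • L ⊓ W ⊔ L' ⊓ W := by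
  have hLW : L ⊓ W ≤ p • L ⊓ W ⊔ L' ⊓ W := by
    rw [inf_eq_inf_sup_smul_inf h]
    exact sup_le (le_sup_of_le_right (inf_le_inf_right W inf_le_right)) le_sup_left
  have hstep : p⁻¹ • (p • L ⊓ W ⊔ L' ⊓ W) ≤ p • L ⊓ W ⊔ L' ⊓ W := by
    rw [Submodule.smul_sup', smul_inf₀ (inv_ne_zero hp), smul_inf₀ (inv_ne_zero hp), hpW,
      inv_smul_smul₀ hp]
    exact sup_le hLW (le_sup_of_le_right (inf_le_inf_right W hpL'))
  have hpow (n : ℕ) (x : M) (hx : x ∈ W) (hnx : p ^ n • x ∈ L) : x ∈ p • L ⊓ W ⊔ L' ⊓ W := by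
    induction n generalizing x with
    | zero => exact hLW ⟨by simpa using hnx, hx⟩
    | succ n ih =>
      have hpx : p • x ∈ W := by
        rw [← hpW, mem_smul_iff_inv_smul_mem₀ (inv_ne_zero hp), inv_inv] at hx
        exact hx
      have hpx' := ih (p • x) hpx (by rwa [smul_smul, ← pow_succ])
      simpa [inv_smul_smul₀ hp] using hstep (Submodule.smul_mem_pointwise_smul _ p⁻¹ _ hpx')
  intro x hx
  obtain ⟨n, hn⟩ := hexh x hx
  exact hpow n x hx hn

lemma isInternalSum_smul_inf_inf (hp : p ≠ 0) (hpL : p • L ≤ L) (hpL' : p⁻¹ • L' ≤ L')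
    (hpW : p⁻¹ • W = W) (hexh : ∀ x ∈ W, ∃ n : ℕ, p ^ n • x ∈ L)
    (h : IsInternalSum (L ⊓ L' ⊓ W) (p • L) L) : IsInternalSum (p • L ⊓ W) (L' ⊓ W) W := by
  refine ⟨le_antisymm (sup_le inf_le_right inf_le_right)
    (le_smul_inf_sup_inf hp hpL' hpW hexh h.1), le_bot_iff.1 ?_⟩
  rw [← h.2]
  rintro x ⟨⟨hxpL, hxW⟩, hxL', -⟩
  exact ⟨⟨⟨hpL hxpL, hxL'⟩, hxW⟩, hxpL⟩

lemma isInternalSum_inf_smul (hpL : p • L ≤ L) (hdense : L ≤ L ⊓ W ⊔ p • L)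
    (h : IsInternalSum (p • L ⊓ W) (L' ⊓ W) W) : IsInternalSum (L ⊓ L' ⊓ W) (p • L) L := by
  have hLW : L ⊓ W ≤ L ⊓ L' ⊓ W ⊔ p • L := by
    conv_lhs => rw [← h.1, inf_comm, sup_inf_assoc_of_le _ (inf_le_left.trans hpL)]
    refine sup_le (le_sup_of_le_right inf_le_left) (le_sup_of_le_left ?_)
    rw [inf_comm, inf_assoc]
  refine ⟨le_antisymm (sup_le (inf_le_left.trans inf_le_left) hpL)
    (hdense.trans (sup_le hLW le_sup_right)), le_bot_iff.1 ?_⟩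
  rw [← h.2]
  rintro x ⟨⟨⟨-, hxL'⟩, hxW⟩, hxpL⟩
  exact ⟨⟨hxpL, hxW⟩, hxL', hxW⟩

lemma isInternalSum_iff_smul_inf (hp : Transcendental k p) (hK : k⟮p⟯ = ⊤)
    (hL : IsStableUnder (localAtZero k p : Set K) L)
    (hL' : IsStableUnder (localAtZero k p⁻¹ : Set K) L')
    (hW : IsStableUnder (laurentSubalgebra k p : Set K) W)
    (hLspan : Submodule.span K (L : Set M) = ⊤) (hWspan : Submodule.span K (W : Set M) = ⊤) :
    IsInternalSum (L ⊓ L' ⊓ W) (p • L) L ↔ IsInternalSum (p • L ⊓ W) (L' ⊓ W) W := by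
  have hp0 := ne_zero_of_transcendental hp
  have hpL := hL.smul_le (self_mem_localAtZero p)
  exact ⟨isInternalSum_smul_inf_inf hp0 hpL (hL'.smul_le (self_mem_localAtZero _))
      (hW.smul_laurent_eq hp0).2 fun x _ ↦ exists_pow_smul_mem hp hK hL hLspan x,
    isInternalSum_inf_smul hpL (le_inf_sup_smul hp hK hL hW hWspan)⟩

lemma isInternalSum_iff_inf_inv_smul (hp : Transcendental k p) (hK : k⟮p⟯ = ⊤)
    (hL : IsStableUnder (localAtZero k p : Set K) L)
    (hL' : IsStableUnder (localAtZero k p⁻¹ : Set K) L')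
    (hW : IsStableUnder (laurentSubalgebra k p : Set K) W)
    (hLspan : Submodule.span K (L : Set M) = ⊤) (hWspan : Submodule.span K (W : Set M) = ⊤) :
    IsInternalSum (L ⊓ L' ⊓ W) (p • L) L ↔ IsInternalSum (L ⊓ W) (p⁻¹ • L' ⊓ W) W := by
  have hp0 := ne_zero_of_transcendental hp
  obtain ⟨hpW, hpW'⟩ := hW.smul_laurent_eq hp0
  rw [isInternalSum_iff_smul_inf hp hK hL hL' hW hLspan hWspan]
  refine ⟨fun h ↦ ?_, fun h ↦ ?_⟩
  · simpa only [smul_inf₀ (inv_ne_zero hp0), hpW', inv_smul_smul₀ hp0]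
      using h.smul (inv_ne_zero hp0)
  · simpa only [smul_inf₀ hp0, hpW, smul_inv_smul₀ hp0] using h.smul hp0

end Lattices

section ScalarExtension

open IntermediateField Pointwise

variable {k K M : Type*} [Field k] [Field K] [Algebra k K] [AddCommGroup M] [Module k M]
  [Module K M] [IsScalarTower k K M] {p : K} {S E L L' W : Submodule k M}

/-- The natural map `R ⊗ E → V`, `c ⊗ x ↦ c • x`, is an isomorphism onto `L`. -/
def IsScalarExtension (R : Subalgebra k K) (E L : Submodule k M) : Prop :=
  Function.Injective (E.subtype.liftBaseChange R) ∧
    (LinearMap.range (E.subtype.liftBaseChange R)).restrictScalars k = L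

lemma restrictScalars_range_liftBaseChange (R : Subalgebra k K) (E : Submodule k M) :
    (LinearMap.range (E.subtype.liftBaseChange R)).restrictScalars k =
      (Submodule.span R (E : Set M)).restrictScalars k := by
  rw [LinearMap.range_liftBaseChange, E.range_subtype]

lemma restrictScalars_span_le {R : Subalgebra k K} (hL : IsStableUnder (R : Set K) L)
    (hEL : E ≤ L) : (Submodule.span R (E : Set M)).restrictScalars k ≤ L := by
  intro x hx
  induction hx using Submodule.span_induction with
  | mem x hx => exact hEL hx
  | zero => exact L.zero_mem
  | add x y _ _ hx hy => exact L.add_mem hx hy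
  | smul c x _ hx => exact hL c c.2 x hx

lemma isStableUnder_span (R : Subalgebra k K) (s : Set M) :
    IsStableUnder (R : Set K) ((Submodule.span R s).restrictScalars k) :=
  fun c hc _ hx ↦ (Submodule.span R s).smul_mem ⟨c, hc⟩ hx

lemma inf_smul_pow_le (hp : p ≠ 0) (hL' : L' ≤ p • L') (hpW : p • W = W)
    (hES : L ⊓ L' ⊓ W ≤ S) (hpS : p • S ≤ S) (h : L ⊓ L' ⊓ W ⊔ p • L = L) (m : ℕ) :
    L ⊓ W ⊓ p ^ m • L' ≤ S := by
  induction m with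
  | zero => simpa [inf_right_comm] using hES
  | succ m ih =>
    have hL'pow : L' ≤ p ^ (m + 1) • L' := le_pow_smul hL' (m + 1)
    have hsplit : L ⊓ W ⊓ p ^ (m + 1) • L' = L ⊓ L' ⊓ W ⊔ p • (L ⊓ W ⊓ p ^ m • L') := by
      rw [smul_inf₀ hp, smul_inf₀ hp, hpW, smul_smul, ← pow_succ', inf_eq_inf_sup_smul_inf h,
        sup_inf_assoc_of_le _ ((inf_le_left.trans inf_le_right).trans hL'pow)]
    rw [hsplit]
    exact sup_le hES ((smul_mono_right p ih).trans hpS)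

lemma le_of_inf_inf_le (hp : p ≠ 0) (hpL' : L' ≤ p • L') (hpW : p • W = W)
    (hL : ∀ x ∈ W, ∃ n : ℕ, p ^ n • x ∈ L) (hL' : ∀ x, ∃ n : ℕ, p⁻¹ ^ n • x ∈ L')
    (hES : L ⊓ L' ⊓ W ≤ S) (hpS : p • S = S) (h : L ⊓ L' ⊓ W ⊔ p • L = L) : W ≤ S := by
  intro x hx
  obtain ⟨n, hn⟩ := hL x hx
  obtain ⟨m, hm⟩ := hL' (p ^ n • x)
  have hmem : p ^ n • x ∈ S := by
    refine inf_smul_pow_le hp hpL' hpW hES hpS.le h m ⟨⟨hn, ?_⟩, ?_⟩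
    · exact pow_smul_le hpW.le n (Submodule.smul_mem_pointwise_smul _ _ _ hx)
    · rwa [SetLike.mem_coe, mem_smul_iff_inv_smul_mem₀ (pow_ne_zero m hp), ← inv_pow]
  have hmem' := le_pow_smul hpS.ge n hmem
  rwa [mem_smul_iff_inv_smul_mem₀ (pow_ne_zero n hp), inv_smul_smul₀ (pow_ne_zero n hp)] at hmem'

lemma span_localAtZero_le (E : Submodule k M) :
    (Submodule.span (localAtZero k p) (E : Set M)).restrictScalars k ≤
      E ⊔ p • (Submodule.span (localAtZero k p) (E : Set M)).restrictScalars k := by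
  intro x hx
  induction hx using Submodule.span_induction with
  | mem x hx => exact Submodule.mem_sup_left hx
  | zero => exact zero_mem _
  | add x y _ _ hx hy => exact add_mem hx hy
  | smul c x hxS hx =>
    obtain ⟨r, d, hd, hc⟩ := exists_eq_algebraMap_add_mul_of_mem_localAtZero c.2
    have hcx : c • x = r • x + p • d • x := by
      rw [Subalgebra.smul_def, hc, add_smul, mul_smul, algebraMap_smul]
    rw [hcx]
    refine add_mem (Submodule.smul_mem _ r hx) (Submodule.mem_sup_right
      (Submodule.smul_mem_pointwise_smul _ _ _ ?_))
    exact isStableUnder_span _ _ d hd x hxS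

lemma le_of_le_sup_smul (hp : p ≠ 0) (hpL : p • L ≤ L) (hSL : S ≤ L) (hS : S ≤ E ⊔ p • S)
    (hEL : E ⊓ p • L = ⊥) (hexh : ∀ x ∈ L, ∃ n : ℕ, p ^ n • x ∈ S) : L ≤ S := by
  have hdescend (y : M) (hy : y ∈ L) (hpy : p • y ∈ S) : y ∈ S := by
    obtain ⟨e, he, _, ⟨s, hs, rfl⟩, hes⟩ := Submodule.mem_sup.1 (hS hpy)
    have he0 : e ∈ E ⊓ p • L := by
      refine ⟨he, ?_⟩
      rw [eq_sub_of_add_eq hes]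
      exact sub_mem (Submodule.smul_mem_pointwise_smul _ _ _ hy)
        (Submodule.smul_mem_pointwise_smul _ _ _ (hSL hs))
    rw [hEL, Submodule.mem_bot] at he0
    rw [he0, zero_add] at hes
    exact smul_right_injective M hp hes ▸ hs
  have hpow (n : ℕ) (x : M) (hx : x ∈ L) (hnx : p ^ n • x ∈ S) : x ∈ S := by
    induction n with
    | zero => simpa using hnx
    | succ n ih =>
      have hnL : p ^ n • x ∈ L :=
        pow_smul_le hpL n (Submodule.smul_mem_pointwise_smul _ _ _ hx)
      exact ih (hdescend _ hnL (by rwa [smul_smul, ← pow_succ']))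
  intro x hx
  obtain ⟨n, hn⟩ := hexh x hx
  exact hpow n x hx hn

lemma exists_forall_pow_mul_mem_localAtZero (hp : Transcendental k p) (hK : k⟮p⟯ = ⊤)
    {ι : Type*} (s : Finset ι) (g : ι → K) :
    ∃ n : ℕ, ∀ i ∈ s, p ^ n * g i ∈ localAtZero k p := by
  choose n hn using fun i ↦ exists_pow_mul_mem_localAtZero hp hK (g i)
  refine ⟨s.sup n, fun i hi ↦ ?_⟩
  rw [← Nat.sub_add_cancel (Finset.le_sup hi : n i ≤ s.sup n), pow_add, mul_assoc]
  exact mul_mem (pow_mem (self_mem_localAtZero p) _) (hn i)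

lemma inv_mul_mem_localAtZero_of_sum_smul_eq_zero (hp : p ≠ 0)
    (hL : IsStableUnder (localAtZero k p : Set K) L) (hEL : E ≤ L) (hE : E ⊓ p • L = ⊥)
    {ι : Type*} {b : ι → M} (hbE : ∀ i, b i ∈ E) (hb : LinearIndependent k b) {s : Finset ι}
    {g : ι → K} (hgR : ∀ i ∈ s, g i ∈ localAtZero k p) (hg : ∑ i ∈ s, g i • b i = 0) :
    ∀ i ∈ s, p⁻¹ * g i ∈ localAtZero k p := by
  choose! r d hd hgrd using fun i hi ↦
    exists_eq_algebraMap_add_mul_of_mem_localAtZero (hgR i hi)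
  have hsum : ∑ i ∈ s, r i • b i + p • ∑ i ∈ s, d i • b i = 0 := by
    rw [← hg, Finset.smul_sum, ← Finset.sum_add_distrib]
    refine Finset.sum_congr rfl fun i hi ↦ ?_
    rw [hgrd i hi, add_smul, mul_smul, algebraMap_smul]
  have hr : ∑ i ∈ s, r i • b i ∈ E ⊓ p • L := by
    refine ⟨sum_mem fun i _ ↦ E.smul_mem _ (hbE i), ?_⟩
    rw [eq_neg_of_add_eq_zero_left hsum]
    exact neg_mem (Submodule.smul_mem_pointwise_smul _ _ _
      (sum_mem fun i hi ↦ hL _ (hd i hi) _ (hEL (hbE i))))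
  rw [hE, Submodule.mem_bot] at hr
  intro i hi
  rw [hgrd i hi, linearIndependent_iff'.1 hb s r hr i hi, map_zero, zero_add,
    inv_mul_cancel_left₀ hp]
  exact hd i hi

lemma linearIndependent_of_inf_smul_eq_bot (hp : Transcendental k p) (hK : k⟮p⟯ = ⊤)
    (hL : IsStableUnder (localAtZero k p : Set K) L) (hEL : E ≤ L) (hE : E ⊓ p • L = ⊥)
    {ι : Type*} {b : ι → M} (hbE : ∀ i, b i ∈ E) (hb : LinearIndependent k b) :
    LinearIndependent K b := by
  have hp0 := ne_zero_of_transcendental hp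
  rw [linearIndependent_iff']
  intro s g hg i hi
  obtain ⟨n, hn⟩ := exists_forall_pow_mul_mem_localAtZero hp hK s g
  have hmem (m : ℕ) : ∀ i ∈ s, p⁻¹ ^ m * (p ^ n * g i) ∈ localAtZero k p := by
    induction m with
    | zero => simpa using hn
    | succ m ih =>
      have hsum : ∑ i ∈ s, (p⁻¹ ^ m * (p ^ n * g i)) • b i = 0 := by
        simp_rw [mul_smul, ← Finset.smul_sum, hg, smul_zero]
      simpa only [pow_succ', mul_assoc] using
        inv_mul_mem_localAtZero_of_sum_smul_eq_zero hp0 hL hEL hE hbE hb ih hsum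
  have hzero := eq_zero_of_forall_inv_pow_mul_mem_localAtZero hp hK fun m ↦ hmem m i hi
  exact (mul_eq_zero.1 hzero).resolve_left (pow_ne_zero n hp0)

lemma injective_liftBaseChange_of_inf_smul_eq_bot (hp : Transcendental k p) (hK : k⟮p⟯ = ⊤)
    (hL : IsStableUnder (localAtZero k p : Set K) L) (hEL : E ≤ L) (hE : E ⊓ p • L = ⊥) :
    Function.Injective (E.subtype.liftBaseChange K) := by
  let b := Module.Basis.ofVectorSpace k E
  have hb : LinearIndependent K fun i ↦ (b i : M) :=
    linearIndependent_of_inf_smul_eq_bot hp hK hL hEL hE (fun i ↦ (b i).2)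
      (b.linearIndependent.map' E.subtype E.ker_subtype)
  have hcomp : E.subtype.liftBaseChange K ∘ b.baseChange K = fun i ↦ (b i : M) := by
    ext i
    simp [Module.Basis.baseChange_apply]
  exact LinearMap.injective_of_linearIndependent (b.baseChange K).span_eq (hcomp ▸ hb)

lemma injective_liftBaseChange_subalgebra (R : Subalgebra k K)
    (h : Function.Injective (E.subtype.liftBaseChange K)) :
    Function.Injective (E.subtype.liftBaseChange R) := by
  have hfactor : (E.subtype.liftBaseChange K).restrictScalars k ∘ₗ R.val.toLinearMap.rTensor E =
      (E.subtype.liftBaseChange R).restrictScalars k := by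
    ext c x
    simp [Subalgebra.smul_def]
  have hinj := h.comp (Module.Flat.rTensor_preserves_injective_linearMap (M := E)
    R.val.toLinearMap Subtype.val_injective)
  exact (congrArg DFunLike.coe hfactor) ▸ hinj

lemma exists_linearMap_one_ne_zero (hp : Transcendental k p) :
    ∃ φ : localAtZero k p →ₗ[k] k, φ 1 ≠ 0 ∧
      ∀ c, φ (⟨p, self_mem_localAtZero p⟩ * c) = 0 := by
  have hone : 1 ∉ LinearMap.range
      (LinearMap.mulLeft k (⟨p, self_mem_localAtZero p⟩ : localAtZero k p)) := by
    rintro ⟨c, hc⟩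
    have hpc : p * c = 1 := congrArg Subtype.val hc
    exact inv_notMem_localAtZero hp (eq_inv_of_mul_eq_one_right hpc ▸ c.2)
  obtain ⟨φ, hφ, hker⟩ := Submodule.exists_le_ker_of_notMem hone
  exact ⟨φ, hφ, fun c ↦ hker ⟨c, rfl⟩⟩

lemma inf_smul_eq_bot_of_isScalarExtension (hp : Transcendental k p)
    (h : IsScalarExtension (localAtZero k p) E L) : E ⊓ p • L = ⊥ := by
  obtain ⟨φ, hφ, hφp⟩ := exists_linearMap_one_ne_zero hp
  set P : localAtZero k p := ⟨p, self_mem_localAtZero p⟩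
  have hφ_smul (t : localAtZero k p ⊗[k] E) : φ.rTensor E (P • t) = 0 := by
    induction t using TensorProduct.induction_on with
    | zero => simp
    | tmul c x => rw [TensorProduct.smul_tmul', smul_eq_mul, LinearMap.rTensor_tmul, hφp,
        TensorProduct.zero_tmul]
    | add t u ht hu => rw [smul_add, map_add, ht, hu, add_zero]
  rw [eq_bot_iff]
  rintro _ ⟨hx, y, hy, rfl⟩
  obtain ⟨t, rfl⟩ : y ∈ LinearMap.range (E.subtype.liftBaseChange (localAtZero k p)) := by
    rw [← h.2] at hy
    exact hy
  have htensor : P • t = 1 ⊗ₜ ⟨_, hx⟩ := h.1 <| by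
    rw [map_smul]
    simp [Subalgebra.smul_def, P]
  have hzero := congrArg (TensorProduct.lid k E) (htensor ▸ hφ_smul t)
  simp only [LinearMap.rTensor_tmul, TensorProduct.lid_tmul, map_zero, smul_eq_zero, hφ,
    false_or] at hzero
  exact congrArg Subtype.val hzero

lemma isInternalSum_of_isScalarExtension (hp : Transcendental k p)
    (h : IsScalarExtension (localAtZero k p) E L) : IsInternalSum E (p • L) L := by
  have hspan : (Submodule.span (localAtZero k p) (E : Set M)).restrictScalars k = L := by
    rw [← restrictScalars_range_liftBaseChange, h.2]
  have hEL : E ≤ L := hspan ▸ Submodule.subset_span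
  have hpL : p • L ≤ L := hspan ▸ (isStableUnder_span _ _).smul_le (self_mem_localAtZero p)
  have hLE : L ≤ E ⊔ p • L := hspan ▸ span_localAtZero_le E
  exact ⟨le_antisymm (sup_le hEL hpL) hLE, inf_smul_eq_bot_of_isScalarExtension hp h⟩

lemma isScalarExtension_localAtZero (hp : Transcendental k p) (hK : k⟮p⟯ = ⊤)
    (hL : IsStableUnder (localAtZero k p : Set K) L) (hEL : E ≤ L) (hE : E ⊓ p • L = ⊥)
    (hEspan : Submodule.span K (E : Set M) = ⊤) : IsScalarExtension (localAtZero k p) E L := by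
  refine ⟨injective_liftBaseChange_subalgebra _
    (injective_liftBaseChange_of_inf_smul_eq_bot hp hK hL hEL hE), ?_⟩
  rw [restrictScalars_range_liftBaseChange]
  set S := (Submodule.span (localAtZero k p) (E : Set M)).restrictScalars k
  have hSspan : Submodule.span K (S : Set M) = ⊤ :=
    top_le_iff.1 (hEspan ▸ Submodule.span_mono Submodule.subset_span)
  have hSL : S ≤ L := restrictScalars_span_le hL hEL
  exact le_antisymm hSL (le_of_le_sup_smul (ne_zero_of_transcendental hp)
    (hL.smul_le (self_mem_localAtZero p)) hSL (span_localAtZero_le E) hE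
    fun x _ ↦ exists_pow_smul_mem hp hK (isStableUnder_span _ _) hSspan x)

lemma le_restrictScalars_span_laurentSubalgebra (hp : Transcendental k p) (hK : k⟮p⟯ = ⊤)
    (hL : IsStableUnder (localAtZero k p : Set K) L)
    (hL' : IsStableUnder (localAtZero k p⁻¹ : Set K) L')
    (hW : IsStableUnder (laurentSubalgebra k p : Set K) W)
    (hLspan : Submodule.span K (L : Set M) = ⊤) (hL'span : Submodule.span K (L' : Set M) = ⊤)
    (h : L ⊓ L' ⊓ W ⊔ p • L = L) :
    W ≤ (Submodule.span (laurentSubalgebra k p)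
      ((L ⊓ L' ⊓ W : Submodule k M) : Set M)).restrictScalars k := by
  have hp0 := ne_zero_of_transcendental hp
  have hpL' : L' ≤ p • L' := fun x hx ↦
    (mem_smul_iff_inv_smul_mem₀ hp0).2 (hL' _ (self_mem_localAtZero p⁻¹) x hx)
  exact le_of_inf_inf_le hp0 hpL' (hW.smul_laurent_eq hp0).1
    (fun x _ ↦ exists_pow_smul_mem hp hK hL hLspan x)
    (exists_pow_smul_mem (transcendental_inv hp) (adjoin_simple_inv_eq_top hK) hL' hL'span)
    Submodule.subset_span ((isStableUnder_span _ _).smul_laurent_eq hp0).1 h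

lemma span_eq_top_of_le_restrictScalars_span (R : Subalgebra k K)
    (hWspan : Submodule.span K (W : Set M) = ⊤)
    (h : W ≤ (Submodule.span R (E : Set M)).restrictScalars k) :
    Submodule.span K (E : Set M) = ⊤ := by
  rw [← top_le_iff, ← hWspan, Submodule.span_le]
  exact fun x hx ↦ Submodule.span_le_restrictScalars R K (E : Set M) (h hx)

lemma isScalarExtension_of_isInternalSum (hp : Transcendental k p) (hK : k⟮p⟯ = ⊤)
    (hL : IsStableUnder (localAtZero k p : Set K) L)
    (hL' : IsStableUnder (localAtZero k p⁻¹ : Set K) L')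
    (hW : IsStableUnder (laurentSubalgebra k p : Set K) W)
    (hLspan : Submodule.span K (L : Set M) = ⊤) (hL'span : Submodule.span K (L' : Set M) = ⊤)
    (hWspan : Submodule.span K (W : Set M) = ⊤)
    (h : IsInternalSum (L ⊓ L' ⊓ W) (p • L) L) (h' : IsInternalSum (L ⊓ L' ⊓ W) (p⁻¹ • L') L') :
    IsScalarExtension (localAtZero k p) (L ⊓ L' ⊓ W) L ∧
      IsScalarExtension (localAtZero k p⁻¹) (L ⊓ L' ⊓ W) L' ∧
      IsScalarExtension (laurentSubalgebra k p) (L ⊓ L' ⊓ W) W ∧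
      Function.Bijective ((L ⊓ L' ⊓ W).subtype.liftBaseChange K) := by
  have hEL : L ⊓ L' ⊓ W ≤ L := inf_le_left.trans inf_le_left
  have hEL' : L ⊓ L' ⊓ W ≤ L' := inf_le_left.trans inf_le_right
  have hWE := le_restrictScalars_span_laurentSubalgebra hp hK hL hL' hW hLspan hL'span h.1
  have hEspan := span_eq_top_of_le_restrictScalars_span _ hWspan hWE
  have hinj := injective_liftBaseChange_of_inf_smul_eq_bot hp hK hL hEL h.2
  refine ⟨isScalarExtension_localAtZero hp hK hL hEL h.2 hEspan,
    isScalarExtension_localAtZero (transcendental_inv hp) (adjoin_simple_inv_eq_top hK) hL' hEL'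
      h'.2 hEspan,
    ⟨injective_liftBaseChange_subalgebra _ hinj, ?_⟩, hinj, ?_⟩
  · rw [restrictScalars_range_liftBaseChange]
    exact (restrictScalars_span_le hW inf_le_right).antisymm hWE
  · rw [← LinearMap.range_eq_top, LinearMap.range_liftBaseChange, Submodule.range_subtype, hEspan]

theorem stmt5_general {q : K} (hq : Transcendental k q) (hK : k⟮q⟯ = ⊤) {L₀ L' W : Submodule k M}
    (hL₀ : IsStableUnder (localAtZero k q : Set K) L₀)
    (hL' : IsStableUnder (localAtZero k q⁻¹ : Set K) L')
    (hW : IsStableUnder (laurentSubalgebra k q : Set K) W)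
    (hL₀span : Submodule.span K (L₀ : Set M) = ⊤)
    (hL'span : Submodule.span K (L' : Set M) = ⊤)
    (hWspan : Submodule.span K (W : Set M) = ⊤) :
    List.TFAE [
      IsInternalSum (L₀ ⊓ L' ⊓ W) (q • L₀) L₀,
      IsInternalSum (L₀ ⊓ L' ⊓ W) (q⁻¹ • L') L',
      IsInternalSum (L₀ ⊓ W) (q⁻¹ • L' ⊓ W) W,
      IsScalarExtension (localAtZero k q) (L₀ ⊓ L' ⊓ W) L₀ ∧
        IsScalarExtension (localAtZero k q⁻¹) (L₀ ⊓ L' ⊓ W) L' ∧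
        IsScalarExtension (laurentSubalgebra k q) (L₀ ⊓ L' ⊓ W) W ∧
        Function.Bijective ((L₀ ⊓ L' ⊓ W).subtype.liftBaseChange K)] := by
  tfae_have hL₀_iff : 1 ↔ 3 :=
    isInternalSum_iff_inf_inv_smul hq hK hL₀ hL' hW hL₀span hWspan
  tfae_have hL'_iff : 2 ↔ 3 := by
    rw [inf_comm L₀ L', isInternalSum_iff_smul_inf (transcendental_inv hq)
      (adjoin_simple_inv_eq_top hK) hL' (by rwa [inv_inv]) (by rwa [laurentSubalgebra_inv])
      hL'span hWspan]
    exact ⟨.symm, .symm⟩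
  tfae_have 4 → 1 := fun h ↦ isInternalSum_of_isScalarExtension hq h.1
  tfae_have 1 → 4 := fun h ↦ isScalarExtension_of_isInternalSum hq hK hL₀ hL' hW hL₀span
    hL'span hWspan h (hL'_iff.2 (hL₀_iff.1 h))
  tfae_finish

end ScalarExtension

section RationalFunctions

open Polynomial IntermediateField Pointwise

-- `KK` is by default a `ℚ`-algebra as a division ring of characteristic zero, whereas the library
-- states its facts on `RatFunc` for the algebra structure coming from polynomials.
lemma transcendental_qq : Transcendental ℚ qq :=
  Subsingleton.elim (RatFunc.instAlgebraOfPolynomial ℚ ℚ) DivisionRing.toRatAlgebra ▸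
    RatFunc.transcendental_X

lemma adjoin_qq : ℚ⟮qq⟯ = ⊤ :=
  Subsingleton.elim (RatFunc.instAlgebraOfPolynomial ℚ ℚ) DivisionRing.toRatAlgebra ▸
    RatFunc.adjoin_X

lemma aeval_qq (f : ℚ[X]) : aeval qq f = algebraMap ℚ[X] KK f := by
  have h : (aeval (R := ℚ) qq).toRingHom = algebraMap ℚ[X] KK := by
    refine ringHom_ext' (Subsingleton.elim _ _) ?_
    exact (aeval_X (R := ℚ) qq).trans RatFunc.algebraMap_X.symm
  exact congr($h f)

lemma coe_localAtZero_qq : (localAtZero ℚ qq : Set KK) = A0set := by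
  ext x
  simp only [SetLike.mem_coe, mem_localAtZero_iff transcendental_qq, aeval_qq, A0set,
    Set.mem_ofPred_eq]

lemma coe_localAtZero_inv_qq : (localAtZero ℚ qq⁻¹ : Set KK) = AinfSet := by
  ext x
  exact mem_localAtZero_iff (transcendental_inv transcendental_qq)

lemma coe_laurentSubalgebra_qq : (laurentSubalgebra ℚ qq : Set KK) = Aset := by
  ext x
  simp only [SetLike.mem_coe,
    mem_laurentSubalgebra_iff (ne_zero_of_transcendental transcendental_qq), aeval_qq, Aset,
    Set.mem_ofPred_eq]

variable {W : Type} [AddCommGroup W] [Module ℚ W]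

lemma bijective_balMap_iff {L E N : Submodule ℚ W} (hE : E ≤ L) (hN : N ≤ L) :
    Function.Bijective (balMap L E hE (N.comap L.subtype)) ↔ IsInternalSum E N L := by
  let π : E →ₗ[ℚ] L ⧸ N.comap L.subtype := (N.comap L.subtype).mkQ ∘ₗ Submodule.inclusion hE
  have hinj : Function.Injective π ↔ E ⊓ N = ⊥ := by
    rw [← LinearMap.ker_eq_bot, LinearMap.ker_comp, Submodule.ker_mkQ, ← disjoint_iff,
      Submodule.disjoint_iff_comap_eq_bot]
    rfl
  have hsurj : Function.Surjective π ↔ E ⊔ N = L := by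
    rw [← LinearMap.range_eq_top, LinearMap.range_comp, Submodule.map_mkQ_eq_top,
      Submodule.range_inclusion, sup_comm]
    change E.submoduleOf L ⊔ N.submoduleOf L = ⊤ ↔ _
    rw [← Submodule.submoduleOf_sup_of_le hE hN, Submodule.submoduleOf_eq_top]
    exact ⟨(sup_le hE hN).antisymm, Eq.ge⟩
  exact and_comm.trans (and_congr hsurj hinj)

variable [Module KK W]

lemma scalMul_eq_smul (c : KK) (L : Submodule ℚ W) : scalMul c L = c • L := by
  have hset : {x | ∃ y ∈ L, x = c • y} = ((c • L : Submodule ℚ W) : Set W) := by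
    ext x
    exact ⟨fun ⟨y, hy, hx⟩ ↦ ⟨y, hy, hx.symm⟩, fun ⟨y, hy, hx⟩ ↦ ⟨y, hy, hx.symm⟩⟩
  rw [scalMul, hset, Submodule.span_eq]

lemma bijective_balMap_scalMul_iff {R : Set KK} {L E : Submodule ℚ W} (hE : E ≤ L)
    (hL : IsStableUnder R L) {c : KK} (hc : c ∈ R) :
    Function.Bijective (balMap L E hE ((scalMul c L).comap L.subtype)) ↔
      IsInternalSum E (c • L) L := by
  rw [scalMul_eq_smul, bijective_balMap_iff hE (hL.smul_le hc)]

lemma isScalarExtension_iff_smulPair {R : Subalgebra ℚ KK} {s : Set KK} (hR : (R : Set KK) = s)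
    (E L : Submodule ℚ W) :
    IsScalarExtension R E L ↔ Function.Injective (smulPair (Submodule.span ℚ s) E) ∧
      LinearMap.range (smulPair (Submodule.span ℚ s) E) = L := by
  let e := (Subalgebra.toSubmoduleEquiv R).rTensor E
  have h : ⇑(smulPair (Subalgebra.toSubmodule R) E) = E.subtype.liftBaseChange R ∘ e := by
    ext t
    induction t using TensorProduct.induction_on with
    | zero => simp
    | tmul c x => rfl
    | add t u ht hu => simpa using congr($ht + $hu)
  rw [← hR, ← Subalgebra.coe_toSubmodule, Submodule.span_eq, h, EquivLike.injective_comp,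
    IsScalarExtension, ← SetLike.coe_set_eq, ← SetLike.coe_set_eq (q := L), LinearMap.coe_range,
    h, EquivLike.range_comp]
  rfl

lemma coe_smulAll (E : Submodule ℚ W) : ⇑(smulAll E) = E.subtype.liftBaseChange KK := by
  ext t
  induction t using TensorProduct.induction_on with
  | zero => simp
  | tmul c x => rfl
  | add t u ht hu => rw [map_add, map_add, ht, hu]

end RationalFunctions

theorem stmt5 (L0 Li VA : Submodule ℚ V)
    (h0 : IsSubmoduleOver A0set L0) (hi : IsSubmoduleOver AinfSet Li)
    (hA : IsSubmoduleOver Aset VA)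
    (hg0 : Submodule.span KK (L0 : Set V) = ⊤)
    (hgi : Submodule.span KK (Li : Set V) = ⊤)
    (hgA : Submodule.span KK (VA : Set V) = ⊤) :
    (Function.Bijective
        (balMap L0 (L0 ⊓ Li ⊓ VA) (le_trans inf_le_left inf_le_left)
          ((scalMul qq L0).comap L0.subtype))
      ↔ Function.Bijective
        (balMap Li (L0 ⊓ Li ⊓ VA) (le_trans inf_le_left inf_le_right)
          ((scalMul qq⁻¹ Li).comap Li.subtype))) ∧
    (Function.Bijective
        (balMap L0 (L0 ⊓ Li ⊓ VA) (le_trans inf_le_left inf_le_left)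
          ((scalMul qq L0).comap L0.subtype))
      ↔ ((L0 ⊓ VA) ⊔ (scalMul qq⁻¹ Li ⊓ VA) = VA ∧ (L0 ⊓ VA) ⊓ (scalMul qq⁻¹ Li ⊓ VA) = ⊥)) ∧
    (Function.Bijective
        (balMap L0 (L0 ⊓ Li ⊓ VA) (le_trans inf_le_left inf_le_left)
          ((scalMul qq L0).comap L0.subtype))
      ↔ (Function.Injective (smulPair (Submodule.span ℚ A0set) (L0 ⊓ Li ⊓ VA)) ∧
          LinearMap.range (smulPair (Submodule.span ℚ A0set) (L0 ⊓ Li ⊓ VA)) = L0 ∧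
          Function.Injective (smulPair (Submodule.span ℚ AinfSet) (L0 ⊓ Li ⊓ VA)) ∧
          LinearMap.range (smulPair (Submodule.span ℚ AinfSet) (L0 ⊓ Li ⊓ VA)) = Li ∧
          Function.Injective (smulPair (Submodule.span ℚ Aset) (L0 ⊓ Li ⊓ VA)) ∧
          LinearMap.range (smulPair (Submodule.span ℚ Aset) (L0 ⊓ Li ⊓ VA)) = VA ∧
          Function.Bijective (smulAll (L0 ⊓ Li ⊓ VA)))) := by
  have h0' : IsStableUnder (localAtZero ℚ qq : Set KK) L0 := coe_localAtZero_qq ▸ h0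
  have hi' : IsStableUnder (localAtZero ℚ qq⁻¹ : Set KK) Li := coe_localAtZero_inv_qq ▸ hi
  have hA' : IsStableUnder (laurentSubalgebra ℚ qq : Set KK) VA := coe_laurentSubalgebra_qq ▸ hA
  have h := stmt5_general transcendental_qq adjoin_qq h0' hi' hA' hg0 hgi hgA
  simp only [isScalarExtension_iff_smulPair coe_localAtZero_qq,
    isScalarExtension_iff_smulPair coe_localAtZero_inv_qq,
    isScalarExtension_iff_smulPair coe_laurentSubalgebra_qq, ← coe_smulAll, and_assoc] at h
  rw [bijective_balMap_scalMul_iff _ h0' (self_mem_localAtZero qq),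
    bijective_balMap_scalMul_iff _ hi' (self_mem_localAtZero qq⁻¹), scalMul_eq_smul]
  exact ⟨h.out 0 1, h.out 0 2, h.out 0 3⟩
end
end
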